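/- arXiv:1411.3267 — 2 statements merged into one kernel-verified Lean document; each statement's English description precedes it below -/
import Mathlib

section
/- Let τ ≥ 0. Let V be a complex Banach space and let A : ℝ → Matrix (Fin p) (Fin p) ℂ be bounded and continuous with every entry almost automorphic, with fundamental matrix Φ_A, and suppose y' = A(t)y has an α-exponential dichotomy with constants c, α > 0 whose projection P commutes with Φ_A(t) for every t. Let ρ > 0, let f : ℝ → (Fin p → V) be bounded, continuous and almost automorphic with sup_{t} ‖f(t)‖ ≤ αρ/(2c), and set φ₀(t) = ∫_ℝ G_A(t,s)·f(s) ds. Let g : ℝ × (Fin p → V) → (Fin p → V) be continuous with g(t,0) = 0 for all t, almost automorphic in t uniformly for y in compact sets, and suppose there is L > 0 with ‖g(t,y₁) − g(t,y₂)‖ ≤ L·‖y₁ − y₂‖ for all t ∈ ℝ and all y₁, y₂ at distance at most ρ from φ₀(t−τ). If 4cL < α, then there exists a unique almost automorphic differentiable y : ℝ → (Fin p → V) with sup_{t} ‖y(t) − φ₀(t)‖ ≤ ρ solving the delayed equation y'(t) = A(t)·y(t) + f(t) + g(t, y(t−τ)) for all t ∈ ℝ. -/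
open MeasureTheory Filter Topology

attribute [local instance] Matrix.linftyOpNormedAddCommGroup Matrix.linftyOpNormedRing
  Matrix.linftyOpNormedAlgebra

/-- A continuous function `ψ : ℝ → V` into a Banach space is almost automorphic if for every
sequence of reals there is a subsequence `(τₙ)` and a function `ψ̃` with
`ψ(t+τₙ) → ψ̃(t)` and `ψ̃(t−τₙ) → ψ(t)` pointwise on `ℝ`. -/
def AlmostAutomorphic {V : Type*} [NormedAddCommGroup V] (ψ : ℝ → V) : Prop :=
  Continuous ψ ∧ ∀ σ : ℕ → ℝ, ∃ k : ℕ → ℕ, StrictMono k ∧ ∃ ψt : ℝ → V,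
    (∀ t : ℝ, Tendsto (fun n => ψ (t + σ (k n))) atTop (𝓝 (ψt t))) ∧
    (∀ t : ℝ, Tendsto (fun n => ψt (t - σ (k n))) atTop (𝓝 (ψ t)))

/-- `g(t,y)` is almost automorphic in `t` uniformly for `y` in compact subsets of `W`. -/
def AlmostAutomorphicUniform {W : Type*} [NormedAddCommGroup W] (g : ℝ → W → W) : Prop :=
  ∀ K : Set W, IsCompact K → ∀ σ : ℕ → ℝ, ∃ k : ℕ → ℕ, StrictMono k ∧ ∃ gt : ℝ → W → W,
    (∀ t : ℝ, TendstoUniformlyOn (fun n y => g (t + σ (k n)) y) (gt t) atTop K) ∧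
    (∀ t : ℝ, TendstoUniformlyOn (fun n y => gt (t - σ (k n)) y) (g t) atTop K)

/-- `Φ` is a fundamental matrix of `y' = A(t) y`: it is differentiable with
`Φ'(t) = A(t) Φ(t)` and `Φ(t)` invertible for every `t`. -/
def IsFundamentalMatrix {p : ℕ} (A Φ : ℝ → Matrix (Fin p) (Fin p) ℂ) : Prop :=
  (∀ t : ℝ, HasDerivAt Φ (A t * Φ t) t) ∧ ∀ t : ℝ, IsUnit (Φ t)

/-- The Green matrix associated with a projection `P` and a fundamental matrix `Φ`. -/
noncomputable def GreenMat {p : ℕ} (Φ : ℝ → Matrix (Fin p) (Fin p) ℂ)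
    (P : Matrix (Fin p) (Fin p) ℂ) (t s : ℝ) : Matrix (Fin p) (Fin p) ℂ :=
  if s ≤ t then Φ t * (Φ s)⁻¹ * P else -(Φ t * (Φ s)⁻¹ * (1 - P))

/-- The action of a complex `p × p` matrix on vectors with entries in a complex vector space. -/
def matSMulVec {V : Type*} [AddCommGroup V] [Module ℂ V] {p : ℕ}
    (M : Matrix (Fin p) (Fin p) ℂ) (v : Fin p → V) : Fin p → V :=
  fun i => ∑ j : Fin p, M i j • v j

/-- The bounded solution `φ₀` of the linear inhomogeneous equation, given by the Green matrix. -/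
noncomputable def greenSol {V : Type*} [NormedAddCommGroup V] [NormedSpace ℂ V]
    [CompleteSpace V] {p : ℕ} (Φ : ℝ → Matrix (Fin p) (Fin p) ℂ)
    (P : Matrix (Fin p) (Fin p) ℂ) (f : ℝ → (Fin p → V)) (t : ℝ) : Fin p → V :=
  ∫ s : ℝ, matSMulVec (GreenMat Φ P t s) (f s)

/-- Convergence data of an almost automorphic function along a fixed sequence. -/
def AAalong {V : Type*} [NormedAddCommGroup V] (ψ : ℝ → V) (σ : ℕ → ℝ) (ψt : ℝ → V) : Prop :=
  (∀ t : ℝ, Tendsto (fun n => ψ (t + σ n)) atTop (𝓝 (ψt t))) ∧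
    (∀ t : ℝ, Tendsto (fun n => ψt (t - σ n)) atTop (𝓝 (ψ t)))

lemma AAalong.subseq {V : Type*} [NormedAddCommGroup V] {ψ : ℝ → V} {σ : ℕ → ℝ} {ψt : ℝ → V}
    (h : AAalong ψ σ ψt) {k : ℕ → ℕ} (hk : Tendsto k atTop atTop) :
    AAalong ψ (fun n => σ (k n)) ψt :=
  ⟨fun t => (h.1 t).comp hk, fun t => (h.2 t).comp hk⟩

lemma AlmostAutomorphic.along {V : Type*} [NormedAddCommGroup V] {ψ : ℝ → V}
    (h : AlmostAutomorphic ψ) (σ : ℕ → ℝ) :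
    ∃ k : ℕ → ℕ, StrictMono k ∧ ∃ ψt : ℝ → V, AAalong ψ (fun n => σ (k n)) ψt := by
  obtain ⟨k, hk, ψt, h1, h2⟩ := h.2 σ
  exact ⟨k, hk, ψt, h1, h2⟩

/-- The diagonal argument: countably many almost automorphic functions have a
common subsequence. -/
lemma AA_diagonal {V : Type*} [NormedAddCommGroup V] (ψ : ℕ → ℝ → V)
    (h : ∀ N, AlmostAutomorphic (ψ N)) (σ : ℕ → ℝ) :
    ∃ k : ℕ → ℕ, StrictMono k ∧ ∃ ψt : ℕ → ℝ → V,
      ∀ N, AAalong (ψ N) (fun n => σ (k n)) (ψt N) := by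
  choose sub hsub lim hlim using fun N => (h N).along
  -- `K N` is the composed extraction after `N` steps
  let K : ℕ → ℕ → ℕ := fun N => Nat.rec (motive := fun _ => ℕ → ℕ) id
    (fun N kk => kk ∘ sub N (fun n => σ (kk n))) N
  have hK0 : K 0 = id := rfl
  have hKs : ∀ N, K (N + 1) = K N ∘ sub N (fun n => σ (K N n)) := fun N => rfl
  have hKm : ∀ N, StrictMono (K N) := by
    intro N
    induction N with
    | zero => rw [hK0]; exact strictMono_id
    | succ N ih => rw [hKs]; exact ih.comp (hsub _ _)
  have hKle : ∀ N d, ∃ m : ℕ → ℕ, StrictMono m ∧ K (N + d) = K N ∘ m := by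
    intro N d
    induction d with
    | zero => exact ⟨id, strictMono_id, rfl⟩
    | succ d ih =>
      obtain ⟨m, hm, he⟩ := ih
      refine ⟨m ∘ sub (N + d) (fun n => σ (K (N + d) n)), hm.comp (hsub _ _), ?_⟩
      rw [← add_assoc, hKs, ← Function.comp_assoc, ← he]
  refine ⟨fun n => K n n, ?_, fun N => lim N (fun n => σ (K N n)), fun N => ?_⟩
  · refine strictMono_nat_of_lt_succ fun n => ?_
    have h1 : K (n + 1) (n + 1) = K n (sub n (fun n' => σ (K n n')) (n + 1)) := by
      rw [hKs]; rfl
    rw [h1]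
    exact hKm n (lt_of_lt_of_le (Nat.lt_succ_self n) ((hsub n _).id_le _))
  · have hb : AAalong (ψ N) (fun n => σ (K (N + 1) n)) (lim N (fun n => σ (K N n))) := by
      have := hlim N (fun n => σ (K N n))
      rw [hKs]; exact this
    have hex : ∀ n, ∃ m : ℕ, n ≤ m ∧ (N + 1 ≤ n → K n n = K (N + 1) m) := by
      intro n
      by_cases hn : N + 1 ≤ n
      · obtain ⟨d, rfl⟩ := Nat.exists_eq_add_of_le hn
        obtain ⟨m, hm, he⟩ := hKle (N + 1) d
        exact ⟨m (N + 1 + d), hm.id_le _, fun _ => by rw [he]; rfl⟩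
      · exact ⟨n, le_rfl, fun h => absurd h hn⟩
    choose m hm1 hm2 using hex
    have hmt : Tendsto m atTop atTop := tendsto_atTop_mono hm1 tendsto_id
    have hs := hb.subseq hmt
    have hev : ∀ᶠ n in atTop, K (N + 1) (m n) = K n n := by
      filter_upwards [eventually_ge_atTop (N + 1)] with n hn
      exact (hm2 n hn).symm
    refine ⟨fun t => (hs.1 t).congr' ?_, fun t => (hs.2 t).congr' ?_⟩ <;>
    · filter_upwards [hev] with n hn
      rw [hn]

lemma AA_of_uniform_limit {V : Type*} [NormedAddCommGroup V] [CompleteSpace V]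
    (ψ : ℕ → ℝ → V) (h : ∀ N, AlmostAutomorphic (ψ N)) (y : ℝ → V)
    (hy : TendstoUniformly ψ y atTop) : AlmostAutomorphic y := by
  refine ⟨hy.continuous (Frequently.of_forall fun N => (h N).1), fun σ => ?_⟩
  obtain ⟨k, hk, ψt, hψ⟩ := AA_diagonal ψ h σ
  have hcl : ∀ N M ε, (∀ t, dist (ψ N t) (ψ M t) ≤ ε) →
      ∀ t, dist (ψt N t) (ψt M t) ≤ ε := by
    intro N M ε he t
    exact le_of_tendsto (((hψ N).1 t).dist ((hψ M).1 t)) (Eventually.of_forall fun n => he _)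
  rw [Metric.tendstoUniformly_iff] at hy
  have hC : ∀ ε > 0, ∃ N0, ∀ N ≥ N0, ∀ t, dist (y t) (ψ N t) < ε := by
    intro ε hε
    exact eventually_atTop.1 (hy ε hε)
  have hcau : ∀ t, CauchySeq (fun N => ψt N t) := by
    intro t
    rw [Metric.cauchySeq_iff']
    intro ε hε
    obtain ⟨N0, hN0⟩ := hC (ε / 3) (by positivity)
    refine ⟨N0, fun N hN => ?_⟩
    refine lt_of_le_of_lt (hcl N N0 (ε / 3 + ε / 3) (fun t => ?_) t) (by linarith)
    exact (dist_triangle_left _ _ (y t)).trans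
      (add_le_add (hN0 N hN t).le (hN0 N0 le_rfl t).le)
  choose yt hyt using fun t => cauchySeq_tendsto_of_complete (hcau t)
  have hyt' : ∀ ε > 0, ∃ N, (∀ t, dist (y t) (ψ N t) ≤ ε) ∧ (∀ t, dist (yt t) (ψt N t) ≤ ε) := by
    intro ε hε
    obtain ⟨N0, hN0⟩ := hC (ε / 2) (by positivity)
    refine ⟨N0, fun t => (hN0 N0 le_rfl t).le.trans (by linarith), fun t => ?_⟩
    refine le_of_tendsto ((hyt t).dist tendsto_const_nhds) ?_
    filter_upwards [eventually_ge_atTop N0] with N hN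
    refine hcl N N0 ε (fun t => ?_) t
    refine (dist_triangle_left _ _ (y t)).trans
      ((add_le_add (hN0 N hN t).le (hN0 N0 le_rfl t).le).trans (by linarith))
  refine ⟨k, hk, yt, fun t => ?_, fun t => ?_⟩
  · rw [Metric.tendsto_atTop]
    intro ε hε
    obtain ⟨N, h1, h2⟩ := hyt' (ε / 4) (by positivity)
    obtain ⟨n0, hn0⟩ := Metric.tendsto_atTop.1 ((hψ N).1 t) (ε / 4) (by positivity)
    refine ⟨n0, fun n hn => ?_⟩
    have a1 := h1 (t + σ (k n))
    have a2 := h2 t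
    have a3 := hn0 n hn
    have := dist_triangle4 (y (t + σ (k n))) (ψ N (t + σ (k n))) (ψt N t) (yt t)
    rw [dist_comm (ψt N t) (yt t)] at this
    linarith
  · rw [Metric.tendsto_atTop]
    intro ε hε
    obtain ⟨N, h1, h2⟩ := hyt' (ε / 4) (by positivity)
    obtain ⟨n0, hn0⟩ := Metric.tendsto_atTop.1 ((hψ N).2 t) (ε / 4) (by positivity)
    refine ⟨n0, fun n hn => ?_⟩
    have a1 := h2 (t - σ (k n))
    have a2 := h1 t
    have a3 := hn0 n hn
    have := dist_triangle4 (yt (t - σ (k n))) (ψt N (t - σ (k n))) (ψ N t) (y t)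
    rw [dist_comm (ψ N t) (y t)] at this
    linarith

lemma AA_compact_range {V : Type*} [NormedAddCommGroup V] {y : ℝ → V}
    (h : AlmostAutomorphic y) : IsCompact (closure (Set.range y)) := by
  apply IsSeqCompact.isCompact
  intro x hx
  have : ∀ n : ℕ, ∃ s : ℝ, dist (x n) (y s) < 1 / ((n : ℝ) + 1) := by
    intro n
    obtain ⟨_, ⟨s, rfl⟩, hs⟩ := Metric.mem_closure_iff.1 (hx n) (1 / ((n : ℝ) + 1)) (by positivity)
    exact ⟨s, hs⟩
  choose σ hσ using this
  obtain ⟨k, hk, yt, h1, h2⟩ := h.2 σ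
  have h0 := h1 0
  simp only [zero_add] at h0
  refine ⟨yt 0, mem_closure_of_tendsto h0 (Eventually.of_forall fun n => ⟨_, rfl⟩), k, hk, ?_⟩
  have hd : Tendsto (fun n => dist (x (k n)) (y (σ (k n)))) atTop (𝓝 0) := by
    refine squeeze_zero (fun _ => dist_nonneg) (fun n => (hσ (k n)).le) ?_
    exact (tendsto_one_div_add_atTop_nhds_zero_nat (𝕜 := ℝ)).comp hk.tendsto_atTop
  exact (tendsto_iff_of_dist hd).2 h0

lemma AA_bounded {V : Type*} [NormedAddCommGroup V] {y : ℝ → V}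
    (h : AlmostAutomorphic y) : ∃ C, ∀ t, ‖y t‖ ≤ C := by
  obtain ⟨C, hC⟩ := (AA_compact_range h).isBounded.exists_norm_le
  exact ⟨C, fun t => hC _ (subset_closure ⟨t, rfl⟩)⟩

lemma AA_add {V : Type*} [NormedAddCommGroup V] {x y : ℝ → V}
    (hx : AlmostAutomorphic x) (hy : AlmostAutomorphic y) :
    AlmostAutomorphic (fun t => x t + y t) := by
  refine ⟨hx.1.add hy.1, fun σ => ?_⟩
  obtain ⟨k, hk, xt, h1⟩ := hx.along σ
  obtain ⟨l, hl, yt, h2⟩ := hy.along (fun n => σ (k n))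
  have h1' := h1.subseq hl.tendsto_atTop
  exact ⟨k ∘ l, hk.comp hl, fun t => xt t + yt t, fun t => (h1'.1 t).add (h2.1 t),
    fun t => (h1'.2 t).add (h2.2 t)⟩

/-- Composition with a uniformly almost automorphic nonlinearity, with delay. -/
lemma AA_comp {V : Type*} [NormedAddCommGroup V] {g : ℝ → V → V} {y : ℝ → V} (τ : ℝ)
    (hgc : Continuous fun q : ℝ × V => g q.1 q.2)
    (hg : AlmostAutomorphicUniform g) (hy : AlmostAutomorphic y) :
    AlmostAutomorphic (fun t => g t (y (t - τ))) := by
  have hyc := hy.1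
  refine ⟨hgc.comp (continuous_id.prodMk (hyc.comp (continuous_id.sub continuous_const))),
    fun σ => ?_⟩
  have hgt : ∀ t, Continuous (g t) := fun t => hgc.comp (Continuous.prodMk_right t)
  obtain ⟨k, hk, yt, h1⟩ := hy.along σ
  obtain ⟨l, hl, gt, g1, g2⟩ := hg _ (AA_compact_range hy) (fun n => σ (k n))
  have h1' := h1.subseq hl.tendsto_atTop
  have hK : ∀ t, yt t ∈ closure (Set.range y) := fun t =>
    mem_closure_of_tendsto (h1.1 t) (Eventually.of_forall fun n => ⟨_, rfl⟩)
  refine ⟨k ∘ l, hk.comp hl, fun t => gt t (yt (t - τ)), fun t => ?_, fun t => ?_⟩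
  · have hc : ContinuousOn (gt t) (closure (Set.range y)) :=
      (g1 t).continuousOn (Frequently.of_forall fun n => (hgt _).continuousOn)
    refine (g1 t).tendsto_comp (hc _ (hK (t - τ))) (tendsto_nhdsWithin_iff.2 ⟨?_, ?_⟩)
    · refine (h1'.1 (t - τ)).congr fun n => ?_
      simp only [Function.comp]; congr 1; ring
    · exact Eventually.of_forall fun n => subset_closure ⟨_, rfl⟩
  · refine (g2 t).tendsto_comp ((hgt t).continuousWithinAt (x := y (t - τ)))
      (tendsto_nhdsWithin_iff.2 ⟨?_, ?_⟩)
    · refine (h1'.2 (t - τ)).congr fun n => ?_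
      simp only [Function.comp]; congr 1; ring
    · exact Eventually.of_forall fun n => hK _

set_option linter.unusedSectionVars false

/-- Abstract exponential dichotomy data on a Banach space `E`. -/
structure Dich {E : Type*} [NormedAddCommGroup E] [NormedSpace ℝ E]
    (A Φ Φi : ℝ → E →L[ℝ] E) (P : E →L[ℝ] E) (G : ℝ → ℝ → E →L[ℝ] E) (c α : ℝ) : Prop where
  contA : Continuous A
  deriv : ∀ t, HasDerivAt Φ (A t * Φ t) t
  inv1 : ∀ t, Φ t * Φi t = 1
  inv2 : ∀ t, Φi t * Φ t = 1
  proj : P * P = P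
  comm : ∀ t, Φ t * P = P * Φ t
  green : ∀ t s, G t s = if s ≤ t then Φ t * Φi s * P else -(Φ t * Φi s * (1 - P))
  cpos : 0 < c
  apos : 0 < α
  bound : ∀ t s, ‖G t s‖ ≤ c * Real.exp (-α * |t - s|)

section expint

lemma integrable_exp_abs {α : ℝ} (hα : 0 < α) : Integrable (fun s : ℝ => Real.exp (-α * |s|)) := by
  rw [← integrableOn_univ, ← Set.Iic_union_Ioi (a := (0 : ℝ)), integrableOn_union]
  constructor
  · refine (integrableOn_exp_mul_Iic hα 0).congr_fun (fun s hs => ?_) measurableSet_Iic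
    simp only [abs_of_nonpos (Set.mem_Iic.1 hs)]; congr 1; ring
  · refine (integrableOn_exp_mul_Ioi (neg_lt_zero.2 hα) 0).congr_fun (fun s hs => ?_)
      measurableSet_Ioi
    simp only [abs_of_pos (Set.mem_Ioi.1 hs)]

lemma integrable_exp_abs_sub {α : ℝ} (hα : 0 < α) (t : ℝ) :
    Integrable (fun s : ℝ => Real.exp (-α * |t - s|)) :=
  (integrable_exp_abs hα).comp_sub_left t

lemma integral_exp_abs_sub {α : ℝ} (hα : 0 < α) (t : ℝ) :
    ∫ s : ℝ, Real.exp (-α * |t - s|) = 2 / α := by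
  rw [integral_sub_left_eq_self (fun s : ℝ => Real.exp (-α * |s|)) volume t,
    integral_comp_abs (f := fun x => Real.exp (-α * x)), integral_exp_mul_Ioi (neg_lt_zero.2 hα)]
  simp
  field_simp

end expint

namespace Dich

variable {E : Type*} [NormedAddCommGroup E] [NormedSpace ℝ E] [CompleteSpace E]
  {A Φ Φi : ℝ → E →L[ℝ] E} {P : E →L[ℝ] E} {G : ℝ → ℝ → E →L[ℝ] E} {c α : ℝ}

lemma deriv_inv (D : Dich A Φ Φi P G c α) (t : ℝ) : HasDerivAt Φi (-(Φi t * A t)) t := by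
  let u : (E →L[ℝ] E)ˣ := ⟨Φ t, Φi t, D.inv1 t, D.inv2 t⟩
  have he : Φi = Ring.inverse ∘ Φ := by
    funext s
    let v : (E →L[ℝ] E)ˣ := ⟨Φ s, Φi s, D.inv1 s, D.inv2 s⟩
    exact (Ring.inverse_unit v).symm
  have h := (hasFDerivAt_ringInverse (𝕜 := ℝ) u).comp_hasDerivAt t (D.deriv t)
  rw [← he] at h
  refine h.congr_deriv ?_
  change -(Φi t * (A t * Φ t) * Φi t) = _
  rw [mul_assoc, mul_assoc, D.inv1, mul_one]

lemma contΦ (D : Dich A Φ Φi P G c α) : Continuous Φ :=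
  continuous_iff_continuousAt.2 fun t => (D.deriv t).continuousAt

lemma contΦi (D : Dich A Φ Φi P G c α) : Continuous Φi :=
  continuous_iff_continuousAt.2 fun t => (D.deriv_inv t).continuousAt

lemma commi (D : Dich A Φ Φi P G c α) (t : ℝ) : Φi t * P = P * Φi t := by
  calc Φi t * P = Φi t * P * (Φ t * Φi t) := by rw [D.inv1, mul_one]
    _ = Φi t * (P * Φ t) * Φi t := by simp only [mul_assoc]
    _ = (Φi t * Φ t) * P * Φi t := by rw [← D.comm]; simp only [mul_assoc]
    _ = P * Φi t := by rw [D.inv2, one_mul]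

lemma commA (D : Dich A Φ Φi P G c α) (t : ℝ) : A t * P = P * A t := by
  have h1 : HasDerivAt (fun s => Φ s * P) (A t * Φ t * P) t := (D.deriv t).mul_const P
  have h2 : HasDerivAt (fun s => P * Φ s) (P * (A t * Φ t)) t := (D.deriv t).const_mul P
  have h3 : (fun s => Φ s * P) = (fun s => P * Φ s) := funext D.comm
  rw [h3] at h1
  have h4 := h1.unique h2
  calc A t * P = A t * (Φ t * Φi t) * P := by rw [D.inv1, mul_one]
    _ = A t * Φ t * (Φi t * P) := by simp only [mul_assoc]
    _ = (A t * Φ t * P) * Φi t := by rw [D.commi]; simp only [mul_assoc]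
    _ = P * A t * (Φ t * Φi t) := by rw [h4]; simp only [mul_assoc]
    _ = P * A t := by rw [D.inv1, mul_one]

lemma green_le (D : Dich A Φ Φi P G c α) {t s : ℝ} (h : s ≤ t) : G t s = Φ t * Φi s * P := by
  rw [D.green, if_pos h]

lemma green_gt (D : Dich A Φ Φi P G c α) {t s : ℝ} (h : t < s) :
    G t s = -(Φ t * Φi s * (1 - P)) := by
  rw [D.green, if_neg (not_le.2 h)]

lemma boundP (D : Dich A Φ Φi P G c α) {t s : ℝ} (h : s ≤ t) :
    ‖Φ t * Φi s * P‖ ≤ c := by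
  rw [← D.green_le h]
  refine (D.bound t s).trans ?_
  have : Real.exp (-α * |t - s|) ≤ 1 := by
    rw [Real.exp_le_one_iff]
    nlinarith [D.apos, abs_nonneg (t - s)]
  nlinarith [D.cpos]

lemma boundQ' (D : Dich A Φ Φi P G c α) {t s : ℝ} (h : t < s) :
    ‖Φ t * Φi s * (1 - P)‖ ≤ c := by
  rw [← norm_neg, ← D.green_gt h]
  refine (D.bound t s).trans ?_
  have : Real.exp (-α * |t - s|) ≤ 1 := by
    rw [Real.exp_le_one_iff]
    nlinarith [D.apos, abs_nonneg (t - s)]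
  nlinarith [D.cpos]

lemma boundQ (D : Dich A Φ Φi P G c α) {t s : ℝ} (h : t ≤ s) :
    ‖Φ t * Φi s * (1 - P)‖ ≤ c := by
  have hc : Continuous fun s => ‖Φ t * Φi s * (1 - P)‖ :=
    ((continuous_const.mul D.contΦi).mul continuous_const).norm
  have ht : Tendsto (fun s => ‖Φ t * Φi s * (1 - P)‖) (𝓝[>] s) (𝓝 ‖Φ t * Φi s * (1 - P)‖) :=
    (hc.tendsto s).mono_left nhdsWithin_le_nhds
  refine le_of_tendsto ht ?_
  filter_upwards [self_mem_nhdsWithin] with r hr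
  exact D.boundQ' (lt_of_le_of_lt h hr)

/-- Variation formula for a projection `R` commuting with everything. -/
lemma key0 (D : Dich A Φ Φi P G c α) (R : E →L[ℝ] E) (hR : R * R = R)
    (hΦ : ∀ t, Φ t * R = R * Φ t) (hΦi : ∀ t, Φi t * R = R * Φi t)
    (hA : ∀ t, A t * R = R * A t) (a b t s : ℝ)
    (h1 : ∀ r ∈ Set.uIcc s t, ‖Φ (t + a) * Φi (r + a) * R‖ ≤ c)
    (h2 : ∀ r ∈ Set.uIcc s t, ‖Φ (r + b) * Φi (s + b) * R‖ ≤ c) :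
    ‖Φ (t + b) * Φi (s + b) * R - Φ (t + a) * Φi (s + a) * R‖
      ≤ c * c * |∫ r in s..t, ‖A (r + b) - A (r + a)‖| := by
  have hd : ∀ r, HasDerivAt (fun r => Φ (t + a) * Φi (r + a) * (Φ (r + b) * Φi (s + b) * R))
      (Φ (t + a) * Φi (r + a) * R * (A (r + b) - A (r + a)) *
        (Φ (r + b) * Φi (s + b) * R)) r := by
    intro r
    have e1 : HasDerivAt (fun r => Φi (r + a)) (-(Φi (r + a) * A (r + a))) r :=
      (D.deriv_inv (r + a)).comp_add_const r a
    have e2 : HasDerivAt (fun r => Φ (r + b)) (A (r + b) * Φ (r + b)) r :=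
      (D.deriv (r + b)).comp_add_const r b
    have e3 := (e1.const_mul (Φ (t + a))).mul ((e2.mul_const (Φi (s + b))).mul_const R)
    refine e3.congr_deriv ?_
    have e4 : R * (A (r + b) - A (r + a)) * (Φ (r + b) * Φi (s + b) * R)
        = (A (r + b) - A (r + a)) * (Φ (r + b) * Φi (s + b) * R) := by
      have c1 : R * (A (r + b) - A (r + a)) = (A (r + b) - A (r + a)) * R := by
        rw [mul_sub, sub_mul, hA, hA]
      have c2 : R * (Φ (r + b) * Φi (s + b) * R) = Φ (r + b) * Φi (s + b) * R := by
        rw [← mul_assoc, ← mul_assoc, ← hΦ, mul_assoc (Φ (r + b)), ← hΦi]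
        simp only [mul_assoc, hR]
      rw [c1, mul_assoc, c2]
    have e5 : Φ (t + a) * Φi (r + a) * R * (A (r + b) - A (r + a)) *
        (Φ (r + b) * Φi (s + b) * R) = Φ (t + a) * Φi (r + a) * (R * (A (r + b) - A (r + a)) *
        (Φ (r + b) * Φi (s + b) * R)) := by simp only [mul_assoc]
    rw [e5, e4]
    noncomm_ring
  have cA : ∀ x, Continuous fun r => A (r + x) := fun x =>
    D.contA.comp (continuous_id.add continuous_const)
  have cΦ : ∀ x, Continuous fun r => Φ (r + x) := fun x =>
    D.contΦ.comp (continuous_id.add continuous_const)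
  have cΦi : ∀ x, Continuous fun r => Φi (r + x) := fun x =>
    D.contΦi.comp (continuous_id.add continuous_const)
  have hcont : Continuous fun r => Φ (t + a) * Φi (r + a) * R * (A (r + b) - A (r + a)) *
        (Φ (r + b) * Φi (s + b) * R) :=
    (((continuous_const.mul (cΦi a)).mul continuous_const).mul ((cA b).sub (cA a))).mul
      (((cΦ b).mul continuous_const).mul continuous_const)
  have hftc := intervalIntegral.integral_eq_sub_of_hasDerivAt (fun r _ => hd r)
    (hcont.intervalIntegrable s t)
  have hl : Φ (t + b) * Φi (s + b) * R - Φ (t + a) * Φi (s + a) * R =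
      Φ (t + a) * Φi (t + a) * (Φ (t + b) * Φi (s + b) * R) -
      Φ (t + a) * Φi (s + a) * (Φ (s + b) * Φi (s + b) * R) := by
    rw [D.inv1, D.inv1, one_mul, one_mul]
  rw [hl, ← hftc]
  have hcn : Continuous fun r => ‖A (r + b) - A (r + a)‖ := ((cA b).sub (cA a)).norm
  refine (intervalIntegral.norm_integral_le_abs_of_norm_le
    (g := fun r => c * c * ‖A (r + b) - A (r + a)‖) ?_ ?_).trans ?_
  · refine (ae_restrict_iff' measurableSet_uIoc).2 (Eventually.of_forall fun r hr => ?_)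
    have hr' := Set.uIoc_subset_uIcc hr
    calc _ ≤ ‖Φ (t + a) * Φi (r + a) * R‖ * ‖A (r + b) - A (r + a)‖ *
          ‖Φ (r + b) * Φi (s + b) * R‖ :=
        (norm_mul_le _ _).trans (mul_le_mul_of_nonneg_right (norm_mul_le _ _) (norm_nonneg _))
      _ ≤ c * ‖A (r + b) - A (r + a)‖ * c := by
        gcongr
        · exact mul_nonneg D.cpos.le (norm_nonneg _)
        · exact h1 r hr'
        · exact h2 r hr'
      _ = _ := by ring
  · exact (continuous_const.mul hcn).intervalIntegrable _ _
  · rw [intervalIntegral.integral_const_mul, abs_mul, abs_of_nonneg (mul_nonneg D.cpos.le D.cpos.le)]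

lemma key (D : Dich A Φ Φi P G c α) (a b t s : ℝ) :
    ‖G (t + b) (s + b) - G (t + a) (s + a)‖
      ≤ c * c * |∫ r in s..t, ‖A (r + b) - A (r + a)‖| := by
  rcases le_or_gt s t with h | h
  · rw [D.green_le (by linarith), D.green_le (by linarith)]
    refine D.key0 P D.proj D.comm D.commi D.commA a b t s (fun r hr => ?_) (fun r hr => ?_) <;>
    · rw [Set.uIcc_of_le h] at hr
      exact D.boundP (by linarith [hr.1, hr.2])
  · rw [D.green_gt (by linarith), D.green_gt (by linarith)]
    have e : ∀ X Y : E →L[ℝ] E, -X - -Y = -(X - Y) := fun X Y => by abel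
    rw [e, norm_neg]
    refine D.key0 (1 - P) ?_ ?_ ?_ ?_ a b t s (fun r hr => ?_) (fun r hr => ?_)
    · have := D.proj
      rw [mul_sub, sub_mul, sub_mul, this]; simp
    · intro t; rw [mul_sub, sub_mul, D.comm]; simp
    · intro t; rw [mul_sub, sub_mul, D.commi]; simp
    · intro t; rw [mul_sub, sub_mul, D.commA]; simp
    all_goals
      rw [Set.uIcc_of_ge h.le] at hr
      exact D.boundQ (by linarith [hr.1, hr.2])

/-- Bi-almost automorphy of the Green operator. -/
lemma green_along (D : Dich A Φ Φi P G c α) {C : ℝ} (hC : ∀ t, ‖A t‖ ≤ C) {σ : ℕ → ℝ}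
    {At : ℝ → E →L[ℝ] E} (hA : AAalong A σ At) :
    ∃ Gt : ℝ → ℝ → E →L[ℝ] E,
      (∀ t s, Tendsto (fun n => G (t + σ n) (s + σ n)) atTop (𝓝 (Gt t s))) ∧
      (∀ t s, Tendsto (fun n => Gt (t - σ n) (s - σ n)) atTop (𝓝 (G t s))) := by
  have cA : ∀ x, Continuous fun r => A (r + x) := fun x =>
    D.contA.comp (continuous_id.add continuous_const)
  have hAt : ∀ t, ‖At t‖ ≤ C := fun t =>
    le_of_tendsto (hA.1 t).norm (Eventually.of_forall fun n => hC _)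
  have hAm : StronglyMeasurable At :=
    stronglyMeasurable_of_tendsto atTop (fun n => (cA (σ n)).stronglyMeasurable)
      (tendsto_pi_nhds.2 hA.1)
  have hcau : ∀ t s, CauchySeq (fun n => G (t + σ n) (s + σ n)) := by
    intro t s
    rw [cauchySeq_iff_tendsto_dist_atTop_0]
    have hlim : Tendsto (fun q : ℕ × ℕ => ∫ r in s..t, ‖A (r + σ q.1) - A (r + σ q.2)‖)
        atTop (𝓝 (∫ r in s..t, (0 : ℝ))) := by
      refine intervalIntegral.tendsto_integral_filter_of_dominated_convergence
        (fun _ => C + C) ?_ ?_ ?_ ?_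
      · exact Eventually.of_forall fun q =>
          ((cA _).sub (cA _)).norm.aestronglyMeasurable
      · refine Eventually.of_forall fun q => Eventually.of_forall fun r _ => ?_
        rw [norm_norm]
        exact (norm_sub_le _ _).trans (add_le_add (hC _) (hC _))
      · exact intervalIntegrable_const
      · refine Eventually.of_forall fun r _ => ?_
        rw [← prod_atTop_atTop_eq]
        have := (((hA.1 r).comp tendsto_fst).sub ((hA.1 r).comp
          (tendsto_snd (f := (atTop : Filter ℕ)) (g := (atTop : Filter ℕ))))).norm
        simpa using this
    rw [intervalIntegral.integral_zero] at hlim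
    refine squeeze_zero (fun _ => dist_nonneg) (fun q => ?_)
      (by simpa using hlim.abs.const_mul (c * c))
    rw [dist_eq_norm]
    exact D.key _ _ t s
  choose Gt hGt using fun t s => cauchySeq_tendsto_of_complete (hcau t s)
  refine ⟨Gt, hGt, fun t s => ?_⟩
  have hbd : ∀ n, ‖Gt (t - σ n) (s - σ n) - G t s‖ ≤
      c * c * |∫ r in s..t, ‖At (r - σ n) - A r‖| := by
    intro n
    have hlim : Tendsto (fun m => ∫ r in s..t, ‖A (r + (-σ n + σ m)) - A (r + 0)‖)
        atTop (𝓝 (∫ r in s..t, ‖At (r - σ n) - A r‖)) := by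
      refine intervalIntegral.tendsto_integral_filter_of_dominated_convergence
        (fun _ => C + C) ?_ ?_ ?_ ?_
      · exact Eventually.of_forall fun q =>
          ((cA _).sub (cA _)).norm.aestronglyMeasurable
      · refine Eventually.of_forall fun q => Eventually.of_forall fun r _ => ?_
        rw [norm_norm]
        exact (norm_sub_le _ _).trans (add_le_add (hC _) (hC _))
      · exact intervalIntegrable_const
      · refine Eventually.of_forall fun r _ => ?_
        have := ((hA.1 (r - σ n)).sub_const (A r)).norm
        refine this.congr fun m => ?_
        rw [add_zero, sub_add_eq_add_sub, ← add_assoc]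
        congr 3; ring
    refine le_of_tendsto_of_tendsto (((hGt (t - σ n) (s - σ n)).sub_const (G t s)).norm)
      (hlim.abs.const_mul (c * c)) (Eventually.of_forall fun m => ?_)
    have := D.key 0 (-σ n + σ m) t s
    rw [add_zero t, add_zero s, ← add_assoc, ← add_assoc] at this
    exact this
  rw [tendsto_iff_norm_sub_tendsto_zero]
  have hlim : Tendsto (fun n => ∫ r in s..t, ‖At (r - σ n) - A r‖)
      atTop (𝓝 (∫ r in s..t, (0 : ℝ))) := by
    refine intervalIntegral.tendsto_integral_filter_of_dominated_convergence
      (fun _ => C + C) ?_ ?_ ?_ ?_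
    · exact Eventually.of_forall fun n =>
        ((hAm.comp_measurable (measurable_id.sub_const (σ n))).sub
          D.contA.stronglyMeasurable).norm.aestronglyMeasurable
    · refine Eventually.of_forall fun q => Eventually.of_forall fun r _ => ?_
      rw [norm_norm]
      exact (norm_sub_le _ _).trans (add_le_add (hAt _) (hC _))
    · exact intervalIntegrable_const
    · refine Eventually.of_forall fun r _ => ?_
      simpa using ((hA.2 r).sub_const (A r)).norm
  rw [intervalIntegral.integral_zero] at hlim
  exact squeeze_zero (fun _ => norm_nonneg _) hbd (by simpa using hlim.abs.const_mul (c * c))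

end Dich

lemma tendsto_clm_apply_aux {E : Type*} [NormedAddCommGroup E] [NormedSpace ℝ E]
    {M : ℕ → E →L[ℝ] E} {x : ℕ → E} {M0 : E →L[ℝ] E} {x0 : E}
    (hM : Tendsto M atTop (𝓝 M0)) (hx : Tendsto x atTop (𝓝 x0)) :
    Tendsto (fun n => M n (x n)) atTop (𝓝 (M0 x0)) :=
  ((isBoundedBilinearMap_apply (𝕜 := ℝ) (E := E) (F := E)).continuous.tendsto (M0, x0)).comp
    (hM.prodMk_nhds hx)

namespace Dich

variable {E : Type*} [NormedAddCommGroup E] [NormedSpace ℝ E] [CompleteSpace E]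
  {A Φ Φi : ℝ → E →L[ℝ] E} {P : E →L[ℝ] E} {G : ℝ → ℝ → E →L[ℝ] E} {c α : ℝ}

lemma sm (D : Dich A Φ Φi P G c α) {h : ℝ → E} (hh : Continuous h) (t : ℝ) :
    StronglyMeasurable fun s => G t s (h s) := by
  have e : (fun s => G t s (h s)) = fun s => if s ≤ t then (Φ t * Φi s * P) (h s)
      else (-(Φ t * Φi s * (1 - P))) (h s) := by
    funext s
    rw [D.green]; split_ifs <;> rfl
  rw [e]
  refine StronglyMeasurable.ite (measurableSet_le measurable_id measurable_const) ?_ ?_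
  · exact (((continuous_const.mul D.contΦi).mul continuous_const).clm_apply hh).stronglyMeasurable
  · exact (((continuous_const.mul D.contΦi).mul continuous_const).neg.clm_apply
      hh).stronglyMeasurable

lemma pt_bound (D : Dich A Φ Φi P G c α) {h : ℝ → E} {H : ℝ} (hH : ∀ t, ‖h t‖ ≤ H) (t s : ℝ) :
    ‖G t s (h s)‖ ≤ c * H * Real.exp (-α * |t - s|) := by
  have h0 : 0 ≤ H := (norm_nonneg _).trans (hH 0)
  calc ‖G t s (h s)‖ ≤ ‖G t s‖ * ‖h s‖ := (G t s).le_opNorm _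
    _ ≤ c * Real.exp (-α * |t - s|) * H :=
      mul_le_mul (D.bound t s) (hH s) (norm_nonneg _) (mul_nonneg D.cpos.le (Real.exp_pos _).le)
    _ = _ := by ring

lemma integrable_bound (D : Dich A Φ Φi P G c α) (H t : ℝ) :
    Integrable (fun s => c * H * Real.exp (-α * |t - s|)) :=
  (integrable_exp_abs_sub D.apos t).const_mul _

lemma integrable (D : Dich A Φ Φi P G c α) {h : ℝ → E} (hh : Continuous h) {H : ℝ}
    (hH : ∀ t, ‖h t‖ ≤ H) (t : ℝ) : Integrable fun s => G t s (h s) :=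
  (D.integrable_bound H t).mono' (D.sm hh t).aestronglyMeasurable
    (Eventually.of_forall fun s => D.pt_bound hH t s)

lemma norm_le (D : Dich A Φ Φi P G c α) {h : ℝ → E} {H : ℝ}
    (hH : ∀ t, ‖h t‖ ≤ H) (t : ℝ) : ‖∫ s, G t s (h s)‖ ≤ 2 * c / α * H := by
  refine (norm_integral_le_of_norm_le (D.integrable_bound H t)
    (Eventually.of_forall fun s => D.pt_bound hH t s)).trans (le_of_eq ?_)
  rw [integral_const_mul, integral_exp_abs_sub D.apos]
  ring

/-- The Green integral solves the inhomogeneous linear equation. -/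
lemma solves (D : Dich A Φ Φi P G c α) {h : ℝ → E} (hh : Continuous h) {H : ℝ}
    (hH : ∀ t, ‖h t‖ ≤ H) (t : ℝ) :
    HasDerivAt (fun t => ∫ s, G t s (h s)) (A t (∫ s, G t s (h s)) + h t) t := by
  let u : ℝ → E := fun s => (Φi s * P) (h s)
  let v : ℝ → E := fun s => (Φi s * (1 - P)) (h s)
  have hu : Continuous u := (D.contΦi.mul continuous_const).clm_apply hh
  have hv : Continuous v := (D.contΦi.mul continuous_const).clm_apply hh
  have hGu : ∀ t s, s ≤ t → G t s (h s) = Φ t (u s) := by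
    intro t s hs; rw [D.green_le hs, mul_assoc]; rfl
  have hGv : ∀ t s, t < s → G t s (h s) = -Φ t (v s) := by
    intro t s hs; rw [D.green_gt hs, mul_assoc]; rfl
  have hinv : ∀ t x, Φi t (Φ t x) = x := fun t x => by
    change (Φi t * Φ t) x = x
    rw [D.inv2]; rfl
  have hinv' : ∀ t x, Φ t (Φi t x) = x := fun t x => by
    change (Φ t * Φi t) x = x
    rw [D.inv1]; rfl
  have iu : ∀ t, IntegrableOn u (Set.Iic t) := by
    intro t
    have h1 := ((D.integrable hh hH t).integrableOn (s := Set.Iic t))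
    have h2 := (Φi t).integrable_comp h1
    refine IntegrableOn.congr_fun h2 (fun s hs => ?_) measurableSet_Iic
    simp only [hGu t s hs, hinv]
  have iv : ∀ t, IntegrableOn v (Set.Ioi t) := by
    intro t
    have h1 := ((D.integrable hh hH t).integrableOn (s := Set.Ioi t))
    have h2 := ((Φi t).integrable_comp h1).neg
    refine IntegrableOn.congr_fun h2 (fun s hs => ?_) measurableSet_Ioi
    simp only [Pi.neg_apply, hGv t s hs, map_neg, hinv, neg_neg]
  let w : ℝ → E := fun t => ((∫ s in Set.Iic (0 : ℝ), u s) + ∫ s in (0 : ℝ)..t, u s)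
    - ((∫ s in Set.Ioi (0 : ℝ), v s) - ∫ s in (0 : ℝ)..t, v s)
  have hrep : ∀ t, ∫ s, G t s (h s) = Φ t (w t) := by
    intro t
    rw [← intervalIntegral.integral_Iic_add_Ioi (b := t) (D.integrable hh hH t).integrableOn
      (D.integrable hh hH t).integrableOn]
    have e1 : ∫ s in Set.Iic t, G t s (h s) = Φ t (∫ s in Set.Iic t, u s) := by
      rw [← (Φ t).integral_comp_comm (iu t)]
      exact setIntegral_congr_fun measurableSet_Iic fun s hs => hGu t s hs
    have e2 : ∫ s in Set.Ioi t, G t s (h s) = -Φ t (∫ s in Set.Ioi t, v s) := by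
      rw [← (Φ t).integral_comp_comm (iv t), ← integral_neg]
      exact setIntegral_congr_fun measurableSet_Ioi fun s hs => hGv t s hs
    have e3 := intervalIntegral.integral_Iic_sub_Iic (iu 0) (iu t)
    have e4 := intervalIntegral.integral_interval_add_Ioi (iv 0) (iv t)
    rw [e1, e2, ← sub_eq_add_neg, ← map_sub]
    congr 1
    simp only [w]
    rw [← e3, ← e4]
    abel
  have hw : HasDerivAt w (u t + v t) t := by
    have d1 : HasDerivAt (fun t => ∫ s in (0 : ℝ)..t, u s) (u t) t :=
      intervalIntegral.integral_hasDerivAt_right (hu.intervalIntegrable _ _)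
        (hu.stronglyMeasurableAtFilter _ _) hu.continuousAt
    have d2 : HasDerivAt (fun t => ∫ s in (0 : ℝ)..t, v s) (v t) t :=
      intervalIntegral.integral_hasDerivAt_right (hv.intervalIntegrable _ _)
        (hv.stronglyMeasurableAtFilter _ _) hv.continuousAt
    refine ((d1.const_add (∫ s in Set.Iic (0 : ℝ), u s)).sub
      (d2.const_sub (∫ s in Set.Ioi (0 : ℝ), v s))).congr_deriv ?_
    rw [sub_neg_eq_add]
  have hmain := (D.deriv t).clm_apply hw
  have hfun : (fun t => ∫ s, G t s (h s)) = fun t => Φ t (w t) := funext hrep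
  rw [hfun]
  refine hmain.congr_deriv ?_
  have huv : u t + v t = Φi t (h t) := by
    simp only [u, v]
    rw [← add_apply, ← mul_add]
    simp
  rw [huv, hinv', hrep]
  rfl

/-- The homogeneous equation has no nontrivial bounded solution. -/
lemma homog (D : Dich A Φ Φi P G c α) {z : ℝ → E} {Z : ℝ} (hZ : ∀ t, ‖z t‖ ≤ Z)
    (hz : ∀ t, HasDerivAt z (A t (z t)) t) (t : ℝ) : z t = 0 := by
  have hinv' : ∀ t x, Φ t (Φi t x) = x := fun t x => by
    change (Φ t * Φi t) x = x
    rw [D.inv1]; rfl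
  have hconst : ∀ s, Φi s (z s) = Φi t (z t) := by
    have hd : ∀ s, HasDerivAt (fun s => Φi s (z s)) 0 s := by
      intro s
      refine ((D.deriv_inv s).clm_apply (hz s)).congr_deriv ?_
      simp
    intro s
    exact is_const_of_deriv_eq_zero (fun s => (hd s).differentiableAt) (fun s => (hd s).deriv) s t
  have hexp : Tendsto (fun x : ℝ => c * Z * Real.exp (-α * x)) atTop (𝓝 0) := by
    have : Tendsto (fun x : ℝ => -α * x) atTop atBot :=
      tendsto_id.const_mul_atTop_of_neg (neg_lt_zero.2 D.apos)
    simpa using (Real.tendsto_exp_atBot.comp this).const_mul (c * Z)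
  have hPz : P (z t) = 0 := by
    have hb : ∀ x : ℝ, 0 < x → ‖P (z t)‖ ≤ c * Z * Real.exp (-α * x) := by
      intro x hx
      have e : G t (t - x) (z (t - x)) = P (z t) := by
        rw [D.green_le (by linarith), mul_assoc, D.commi, ← mul_assoc, D.comm, mul_assoc]
        change P (Φ t (Φi (t - x) (z (t - x)))) = _
        rw [hconst, hinv']
      have := D.pt_bound hZ t (t - x)
      rw [e, sub_sub_cancel, abs_of_pos hx] at this
      exact this
    have := ge_of_tendsto hexp (by
      filter_upwards [eventually_gt_atTop (0 : ℝ)] with x hx using hb x hx)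
    exact norm_le_zero_iff.1 this
  have hQz : (1 - P) (z t) = 0 := by
    have hb : ∀ x : ℝ, 0 < x → ‖(1 - P) (z t)‖ ≤ c * Z * Real.exp (-α * x) := by
      intro x hx
      have e : G t (t + x) (z (t + x)) = -(1 - P) (z t) := by
        have q1 : ∀ s, Φi s * (1 - P) = (1 - P) * Φi s := fun s => by
          rw [mul_sub, sub_mul, D.commi]; simp
        have q2 : ∀ s, Φ s * (1 - P) = (1 - P) * Φ s := fun s => by
          rw [mul_sub, sub_mul, D.comm]; simp
        rw [D.green_gt (by linarith), mul_assoc, q1, ← mul_assoc, q2, mul_assoc]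
        change -((1 - P) (Φ t (Φi (t + x) (z (t + x))))) = _
        rw [hconst, hinv']
      have := D.pt_bound hZ t (t + x)
      rw [e, norm_neg, show t - (t + x) = -x by ring, abs_neg, abs_of_pos hx] at this
      exact this
    have := ge_of_tendsto hexp (by
      filter_upwards [eventually_gt_atTop (0 : ℝ)] with x hx using hb x hx)
    exact norm_le_zero_iff.1 this
  have : z t = P (z t) + (1 - P) (z t) := by simp
  rw [this, hPz, hQz, add_zero]

/-- A bounded solution is given by the Green integral. -/
lemma repr (D : Dich A Φ Φi P G c α) {h y : ℝ → E} (hh : Continuous h) {H Y : ℝ}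
    (hH : ∀ t, ‖h t‖ ≤ H) (hY : ∀ t, ‖y t‖ ≤ Y)
    (hy : ∀ t, HasDerivAt y (A t (y t) + h t) t) (t : ℝ) : y t = ∫ s, G t s (h s) := by
  have := D.homog (z := fun t => y t - ∫ s, G t s (h s)) (Z := Y + 2 * c / α * H)
    (fun t => (norm_sub_le _ _).trans (add_le_add (hY t) (D.norm_le hH t)))
    (fun t => ((hy t).sub (D.solves hh hH t)).congr_deriv (by rw [map_sub]; abel)) t
  exact sub_eq_zero.1 this

/-- The Green integral of an almost automorphic function is almost automorphic. -/
lemma aa (D : Dich A Φ Φi P G c α) (hA : AlmostAutomorphic A) {h : ℝ → E}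
    (hh : AlmostAutomorphic h) : AlmostAutomorphic (fun t => ∫ s, G t s (h s)) := by
  obtain ⟨C, hC⟩ := AA_bounded hA
  obtain ⟨H, hH⟩ := AA_bounded hh
  refine ⟨continuous_iff_continuousAt.2 fun t => (D.solves hh.1 hH t).continuousAt, fun σ0 => ?_⟩
  obtain ⟨k, hk, At, h1⟩ := hA.along σ0
  obtain ⟨l, hl, ht, h2⟩ := hh.along (fun n => σ0 (k n))
  have h1' := h1.subseq hl.tendsto_atTop
  obtain ⟨Gt, g1, g2⟩ := D.green_along hC h1'
  refine ⟨k ∘ l, hk.comp hl, fun t => ∫ s, Gt t s (ht s), ?_⟩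
  set σ : ℕ → ℝ := fun n => σ0 (k (l n)) with hσ
  change (∀ t, Tendsto (fun n => ∫ s, G (t + σ n) s (h s)) atTop (𝓝 (∫ s, Gt t s (ht s)))) ∧
    (∀ t, Tendsto (fun n => ∫ s, Gt (t - σ n) s (ht s)) atTop (𝓝 (∫ s, G t s (h s))))
  have m1 : ∀ t n, StronglyMeasurable fun s => G (t + σ n) (s + σ n) (h (s + σ n)) :=
    fun t n => (D.sm hh.1 (t + σ n)).comp_measurable (measurable_id.add_const (σ n))
  have b1 : ∀ t s n, ‖G (t + σ n) (s + σ n) (h (s + σ n))‖ ≤ c * H * Real.exp (-α * |t - s|) := by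
    intro t s n
    have := D.pt_bound hH (t + σ n) (s + σ n)
    rwa [add_sub_add_right_eq_sub] at this
  have l1 : ∀ t s, Tendsto (fun n => G (t + σ n) (s + σ n) (h (s + σ n))) atTop
      (𝓝 (Gt t s (ht s))) := fun t s => tendsto_clm_apply_aux (g1 t s) (h2.1 s)
  have l2 : ∀ t s, Tendsto (fun n => Gt (t - σ n) (s - σ n) (ht (s - σ n))) atTop
      (𝓝 (G t s (h s))) := fun t s => tendsto_clm_apply_aux (g2 t s) (h2.2 s)
  have m2 : ∀ t, StronglyMeasurable fun s => Gt t s (ht s) := fun t =>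
    stronglyMeasurable_of_tendsto atTop (m1 t) (tendsto_pi_nhds.2 (l1 t))
  have b2 : ∀ t s, ‖Gt t s (ht s)‖ ≤ c * H * Real.exp (-α * |t - s|) := fun t s =>
    le_of_tendsto (l1 t s).norm (Eventually.of_forall fun n => b1 t s n)
  constructor
  · intro t
    have := tendsto_integral_of_dominated_convergence _
      (fun n => (m1 t n).aestronglyMeasurable) (D.integrable_bound H t)
      (fun n => Eventually.of_forall fun s => b1 t s n) (Eventually.of_forall fun s => l1 t s)
    refine this.congr fun n => ?_
    exact integral_add_right_eq_self (fun s => G (t + σ n) s (h s)) (σ n)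
  · intro t
    have := tendsto_integral_of_dominated_convergence
      (F := fun n s => Gt (t - σ n) (s - σ n) (ht (s - σ n))) _
      (fun n => ((m2 (t - σ n)).comp_measurable
        (measurable_id.sub_const (σ n))).aestronglyMeasurable) (D.integrable_bound H t)
      (fun n => Eventually.of_forall fun s => by
        have := b2 (t - σ n) (s - σ n)
        rwa [sub_sub_sub_cancel_right] at this) (Eventually.of_forall fun s => l2 t s)
    refine this.congr fun n => ?_
    exact integral_sub_right_eq_self (fun s => Gt (t - σ n) s (ht s)) (σ n)

end Dich

theorem Dich.main {E : Type*} [NormedAddCommGroup E] [NormedSpace ℝ E] [CompleteSpace E]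
    {A Φ Φi : ℝ → E →L[ℝ] E} {P : E →L[ℝ] E} {G : ℝ → ℝ → E →L[ℝ] E} {c α : ℝ}
    (D : Dich A Φ Φi P G c α) (hA : AlmostAutomorphic A) (τ ρ : ℝ) (hρ : 0 < ρ)
    (f : ℝ → E) (hf : AlmostAutomorphic f) (hfb : ∀ t : ℝ, ‖f t‖ ≤ α * ρ / (2 * c))
    (g : ℝ → E → E) (hgc : Continuous fun q : ℝ × E => g q.1 q.2)
    (hg0 : ∀ t : ℝ, g t 0 = 0) (hgaa : AlmostAutomorphicUniform g) (L : ℝ) (hL : 0 < L)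
    (φ : ℝ → E) (hφ : ∀ t, φ t = ∫ s, G t s (f s))
    (hglip : ∀ (t : ℝ) (y₁ y₂ : E), ‖y₁ - φ (t - τ)‖ ≤ ρ → ‖y₂ - φ (t - τ)‖ ≤ ρ →
      ‖g t y₁ - g t y₂‖ ≤ L * ‖y₁ - y₂‖)
    (hLα : 4 * c * L < α) :
    ∃! y : ℝ → E, AlmostAutomorphic y ∧ (∀ t : ℝ, ‖y t - φ t‖ ≤ ρ) ∧
      ∀ t, HasDerivAt y (A t (y t) + f t + g t (y (t - τ))) t := by
  have hc := D.cpos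
  have hα := D.apos
  have hφb : ∀ t, ‖φ t‖ ≤ ρ := by
    intro t
    rw [hφ]
    refine (D.norm_le hfb t).trans (le_of_eq ?_)
    field_simp
  have hφaa : AlmostAutomorphic φ := by
    rw [show φ = fun t => ∫ s, G t s (f s) from funext hφ]
    exact D.aa hA hf
  -- the nonlinearity along admissible functions
  have hgb : ∀ y : ℝ → E, (∀ t, ‖y t - φ t‖ ≤ ρ) → ∀ t, ‖g t (y (t - τ))‖ ≤ 2 * L * ρ := by
    intro y hy t
    have h1 := hglip t (y (t - τ)) 0 (hy _) (by simpa using hφb (t - τ))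
    rw [hg0, sub_zero, sub_zero] at h1
    have h2 : ‖y (t - τ)‖ ≤ 2 * ρ := by
      have := norm_add_le (y (t - τ) - φ (t - τ)) (φ (t - τ))
      rw [sub_add_cancel] at this
      linarith [hy (t - τ), hφb (t - τ)]
    nlinarith
  have hnaa : ∀ y : ℝ → E, AlmostAutomorphic y →
      AlmostAutomorphic (fun t => g t (y (t - τ))) := fun y hy => AA_comp τ hgc hgaa hy
  let T : (ℝ → E) → ℝ → E := fun y t => ∫ s, G t s (f s + g s (y (s - τ)))
  have hTaa : ∀ y, AlmostAutomorphic y → AlmostAutomorphic (T y) := fun y hy =>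
    D.aa hA (AA_add hf (hnaa y hy))
  have hTball : ∀ y, AlmostAutomorphic y → (∀ t, ‖y t - φ t‖ ≤ ρ) →
      ∀ t, ‖T y t - φ t‖ ≤ ρ := by
    intro y hy hyb t
    have h1 : T y t - φ t = ∫ s, G t s (g s (y (s - τ))) := by
      rw [hφ]
      simp only [T, map_add]
      rw [integral_add (D.integrable hf.1 hfb t)
        (D.integrable (hnaa y hy).1 (hgb y hyb) t), add_sub_cancel_left]
    rw [h1]
    refine (D.norm_le (hgb y hyb) t).trans ?_
    have : 2 * c / α * (2 * L * ρ) = (4 * c * L) * ρ / α := by ring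
    rw [this, div_le_iff₀ hα]
    nlinarith
  have hTb : ∀ y, AlmostAutomorphic y → (∀ t, ‖y t - φ t‖ ≤ ρ) → ∀ t, ‖y t‖ ≤ 2 * ρ := by
    intro y hy hyb t
    have := norm_add_le (y t - φ t) (φ t)
    rw [sub_add_cancel] at this
    linarith [hyb t, hφb t]
  have hTlip : ∀ y z, AlmostAutomorphic y → (∀ t, ‖y t - φ t‖ ≤ ρ) →
      AlmostAutomorphic z → (∀ t, ‖z t - φ t‖ ≤ ρ) → ∀ d, (∀ t, ‖y t - z t‖ ≤ d) →
      ∀ t, ‖T y t - T z t‖ ≤ 1 / 2 * d := by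
    intro y z hy hyb hz hzb d hd t
    have hd0 : 0 ≤ d := (norm_nonneg _).trans (hd 0)
    obtain ⟨H1, hH1⟩ := AA_bounded (AA_add hf (hnaa y hy))
    obtain ⟨H2, hH2⟩ := AA_bounded (AA_add hf (hnaa z hz))
    have h1 : T y t - T z t = ∫ s, G t s (g s (y (s - τ)) - g s (z (s - τ))) := by
      simp only [T]
      rw [← integral_sub (D.integrable (AA_add hf (hnaa y hy)).1 hH1 t)
        (D.integrable (AA_add hf (hnaa z hz)).1 hH2 t)]
      congr 1
      funext s
      rw [← map_sub, add_sub_add_left_eq_sub]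
    rw [h1]
    refine (D.norm_le (h := fun s => g s (y (s - τ)) - g s (z (s - τ))) (H := L * d)
      (fun s => (hglip s _ _ (hyb _) (hzb _)).trans
        (mul_le_mul_of_nonneg_left (hd _) hL.le)) t).trans ?_
    have : 2 * c / α * (L * d) = (2 * c * L) * d / α := by ring
    rw [this, div_le_iff₀ hα]
    nlinarith
  let S : Set (BoundedContinuousFunction ℝ E) :=
    {y | AlmostAutomorphic (y : ℝ → E) ∧ ∀ t, ‖y t - φ t‖ ≤ ρ}
  have hScl : IsClosed S := by
    apply IsSeqClosed.isClosed
    intro u y hu huy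
    have hun := (BoundedContinuousFunction.tendsto_iff_tendstoUniformly.1 huy)
    refine ⟨AA_of_uniform_limit (fun n => (u n : ℝ → E)) (fun n => (hu n).1) y hun, fun t => ?_⟩
    exact le_of_tendsto ((hun.tendsto_at t).sub_const (φ t)).norm
      (Eventually.of_forall fun n => (hu n).2 t)
  let mk : ∀ y : ℝ → E, AlmostAutomorphic y → (∀ t, ‖y t - φ t‖ ≤ ρ) → S := fun y h1 h2 =>
    ⟨BoundedContinuousFunction.ofNormedAddCommGroup y h1.1 (2 * ρ) (hTb y h1 h2), h1, h2⟩
  let F : S → S := fun y => mk (T y.1) (hTaa _ y.2.1) (hTball _ y.2.1 y.2.2)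
  have : CompleteSpace S := hScl.completeSpace_coe
  have : Nonempty S := ⟨mk φ hφaa (fun t => by simpa using hρ.le)⟩
  have hF : ContractingWith (1 / 2 : NNReal) F := by
    refine ⟨by norm_num, LipschitzWith.of_dist_le_mul fun y z => ?_⟩
    rw [Subtype.dist_eq, BoundedContinuousFunction.dist_le (by positivity)]
    intro t
    rw [dist_eq_norm]
    have := hTlip y.1 z.1 y.2.1 y.2.2 z.2.1 z.2.2 (dist y z)
      (fun t => by rw [← dist_eq_norm]; exact BoundedContinuousFunction.dist_coe_le_dist t) t
    have e : ((1 / 2 : NNReal) : ℝ) = 1 / 2 := by norm_num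
    rw [e]
    exact this
  -- solutions are the fixed points
  have hsol : ∀ y, AlmostAutomorphic y → (∀ t, ‖y t - φ t‖ ≤ ρ) → (∀ t, T y t = y t) →
      ∀ t, HasDerivAt y (A t (y t) + f t + g t (y (t - τ))) t := by
    intro y hy hyb hTy t
    obtain ⟨H1, hH1⟩ := AA_bounded (AA_add hf (hnaa y hy))
    have h1 := D.solves (AA_add hf (hnaa y hy)).1 hH1 t
    have h2 : (fun t => ∫ s, G t s (f s + g s (y (s - τ)))) = y := funext hTy
    have h3 : ∫ s, G t s (f s + g s (y (s - τ))) = y t := hTy t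
    rw [h2, h3, ← add_assoc] at h1
    exact h1
  have hfix : ∀ y, AlmostAutomorphic y → (∀ t, ‖y t - φ t‖ ≤ ρ) →
      (∀ t, HasDerivAt y (A t (y t) + f t + g t (y (t - τ))) t) → ∀ t, T y t = y t := by
    intro y hy hyb hd t
    obtain ⟨H1, hH1⟩ := AA_bounded (AA_add hf (hnaa y hy))
    exact (D.repr (AA_add hf (hnaa y hy)).1 hH1 (hTb y hy hyb)
      (fun t => by rw [← add_assoc]; exact hd t) t).symm
  let y0 := ContractingWith.fixedPoint F hF
  have hy0 : F y0 = y0 := hF.fixedPoint_isFixedPt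
  refine ⟨y0.1, ⟨y0.2.1, y0.2.2, hsol _ y0.2.1 y0.2.2 fun t => ?_⟩, ?_⟩
  · exact DFunLike.congr_fun (congrArg Subtype.val hy0) t
  · rintro y ⟨h1, h2, h3⟩
    have hy : F (mk y h1 h2) = mk y h1 h2 := by
      apply Subtype.ext
      apply BoundedContinuousFunction.ext
      intro t
      exact hfix y h1 h2 h3 t
    have := hF.fixedPoint_unique (x := mk y h1 h2) hy
    funext t
    exact DFunLike.congr_fun (congrArg Subtype.val this) t

lemma norm_matSMulVec_le {V : Type*} [NormedAddCommGroup V] [NormedSpace ℂ V] {p : ℕ}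
    (M : Matrix (Fin p) (Fin p) ℂ) (v : Fin p → V) : ‖matSMulVec M v‖ ≤ ‖M‖ * ‖v‖ := by
  rw [pi_norm_le_iff_of_nonneg (by positivity)]
  intro i
  have hrow : ∑ j, ‖M i j‖ ≤ ‖M‖ := by
    rw [Matrix.linfty_opNorm_def]
    have h : ∑ j, ‖M i j‖₊ ≤ (Finset.univ : Finset (Fin p)).sup fun i => ∑ j, ‖M i j‖₊ :=
      Finset.le_sup (f := fun i => ∑ j, ‖M i j‖₊) (Finset.mem_univ i)
    have h' := NNReal.coe_le_coe.2 h
    rwa [NNReal.coe_sum] at h'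
  calc ‖∑ j, M i j • v j‖ ≤ ∑ j, ‖M i j‖ * ‖v‖ := by
        refine norm_sum_le_of_le _ fun j _ => ?_
        rw [norm_smul]
        exact mul_le_mul_of_nonneg_left (norm_le_pi_norm v j) (norm_nonneg _)
    _ = (∑ j, ‖M i j‖) * ‖v‖ := by rw [Finset.sum_mul]
    _ ≤ ‖M‖ * ‖v‖ := mul_le_mul_of_nonneg_right hrow (norm_nonneg _)

/-- The action of matrices on `Fin p → V` as a continuous bilinear map. -/
noncomputable def matAct (V : Type*) [NormedAddCommGroup V] [NormedSpace ℂ V] (p : ℕ) :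
    Matrix (Fin p) (Fin p) ℂ →L[ℝ] (Fin p → V) →L[ℝ] (Fin p → V) :=
  LinearMap.mkContinuous₂ (LinearMap.mk₂ ℝ (fun M v => matSMulVec M v)
    (fun M N v => by funext i; simp [matSMulVec, add_smul, Finset.sum_add_distrib])
    (fun r M v => by
      funext i
      simp only [matSMulVec, Pi.smul_apply, Finset.smul_sum, Matrix.smul_apply, smul_assoc])
    (fun M v w => by funext i; simp [matSMulVec, Finset.sum_add_distrib])
    (fun r M v => by
      funext i
      simp only [matSMulVec, Pi.smul_apply, Finset.smul_sum]
      exact Finset.sum_congr rfl fun j _ => smul_comm _ _ _))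
    1 (fun M v => by simpa using norm_matSMulVec_le M v)

lemma matAct_apply {V : Type*} [NormedAddCommGroup V] [NormedSpace ℂ V] {p : ℕ}
    (M : Matrix (Fin p) (Fin p) ℂ) (v : Fin p → V) : matAct V p M v = matSMulVec M v := rfl

lemma matAct_norm_le {V : Type*} [NormedAddCommGroup V] [NormedSpace ℂ V] {p : ℕ}
    (M : Matrix (Fin p) (Fin p) ℂ) : ‖matAct V p M‖ ≤ ‖M‖ :=
  ContinuousLinearMap.opNorm_le_bound _ (norm_nonneg _) fun v => norm_matSMulVec_le M v

lemma matAct_mul {V : Type*} [NormedAddCommGroup V] [NormedSpace ℂ V] {p : ℕ}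
    (M N : Matrix (Fin p) (Fin p) ℂ) : matAct V p (M * N) = matAct V p M * matAct V p N := by
  ext v i
  change ∑ j, (M * N) i j • v j = ∑ j, M i j • ∑ k, N j k • v k
  simp only [Matrix.mul_apply, Finset.sum_smul, Finset.smul_sum, smul_smul]
  exact Finset.sum_comm

lemma matAct_one {V : Type*} [NormedAddCommGroup V] [NormedSpace ℂ V] {p : ℕ} :
    matAct V p 1 = 1 := by
  ext v i
  change ∑ j, (1 : Matrix (Fin p) (Fin p) ℂ) i j • v j = v i
  simp [Matrix.one_apply]

/-- Finitely many almost automorphic functions have a common subsequence. -/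
lemma AA_finite {ι V : Type*} [NormedAddCommGroup V] (ψ : ι → ℝ → V) (F : Finset ι)
    (h : ∀ i, AlmostAutomorphic (ψ i)) (σ : ℕ → ℝ) :
    ∃ k : ℕ → ℕ, StrictMono k ∧ ∃ ψt : ι → ℝ → V,
      ∀ i ∈ F, AAalong (ψ i) (fun n => σ (k n)) (ψt i) := by
  classical
  induction F using Finset.induction_on with
  | empty => exact ⟨id, strictMono_id, fun _ _ => 0, by simp⟩
  | insert a F ha ih =>
    obtain ⟨k, hk, ψt, hψ⟩ := ih
    obtain ⟨l, hl, x, hx⟩ := (h a).along (fun n => σ (k n))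
    refine ⟨k ∘ l, hk.comp hl, Function.update ψt a x, fun i hi => ?_⟩
    by_cases hia : i = a
    · subst hia
      rw [Function.update_self]
      exact hx
    · rw [Function.update_of_ne hia]
      exact (hψ i (Finset.mem_of_mem_insert_of_ne hi hia)).subseq hl.tendsto_atTop

lemma AA_matAct {V : Type*} [NormedAddCommGroup V] [NormedSpace ℂ V] {p : ℕ}
    {A : ℝ → Matrix (Fin p) (Fin p) ℂ} (hAc : Continuous A)
    (hA : ∀ i j : Fin p, AlmostAutomorphic (fun t => A t i j)) :
    AlmostAutomorphic (fun t => matAct V p (A t)) := by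
  refine ⟨(matAct V p).continuous.comp hAc, fun σ => ?_⟩
  obtain ⟨k, hk, ψt, hψ⟩ := AA_finite (fun (q : Fin p × Fin p) t => A t q.1 q.2) Finset.univ
    (fun q => hA q.1 q.2) σ
  let At : ℝ → Matrix (Fin p) (Fin p) ℂ := fun t => Matrix.of fun i j => ψt (i, j) t
  refine ⟨k, hk, fun t => matAct V p (At t), fun t => ?_, fun t => ?_⟩
  · refine ((matAct V p).continuous.tendsto (At t)).comp ?_
    refine tendsto_pi_nhds.2 fun i => tendsto_pi_nhds.2 fun j => ?_
    exact (hψ (i, j) (Finset.mem_univ _)).1 t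
  · refine ((matAct V p).continuous.tendsto (A t)).comp ?_
    refine tendsto_pi_nhds.2 fun i => tendsto_pi_nhds.2 fun j => ?_
    exact (hψ (i, j) (Finset.mem_univ _)).2 t

theorem delayed_nonlinear_matrix_equation_unique_almost_automorphic_solution
    {V : Type*} [NormedAddCommGroup V] [NormedSpace ℂ V] [CompleteSpace V] {p : ℕ}
    (τ : ℝ) (hτ : 0 ≤ τ)
    (A ΦA : ℝ → Matrix (Fin p) (Fin p) ℂ)
    (hAc : Continuous A) (hAb : ∃ C, ∀ t, ‖A t‖ ≤ C)
    (hAaa : ∀ i j : Fin p, AlmostAutomorphic (fun t => A t i j))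
    (hΦA : IsFundamentalMatrix A ΦA)
    (P : Matrix (Fin p) (Fin p) ℂ) (hP : P * P = P)
    (hPcomm : ∀ t : ℝ, ΦA t * P = P * ΦA t)
    (c α : ℝ) (hc : 0 < c) (hα : 0 < α)
    (hdich : ∀ t s : ℝ, ‖GreenMat ΦA P t s‖ ≤ c * Real.exp (-α * |t - s|))
    (ρ : ℝ) (hρ : 0 < ρ)
    (f : ℝ → (Fin p → V)) (hfc : Continuous f) (hfaa : AlmostAutomorphic f)
    (hfb : ∀ t : ℝ, ‖f t‖ ≤ α * ρ / (2 * c))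
    (g : ℝ → (Fin p → V) → (Fin p → V))
    (hgc : Continuous fun q : ℝ × (Fin p → V) => g q.1 q.2)
    (hg0 : ∀ t : ℝ, g t 0 = 0)
    (hgaa : AlmostAutomorphicUniform g)
    (L : ℝ) (hL : 0 < L)
    (hglip : ∀ (t : ℝ) (y₁ y₂ : Fin p → V),
      ‖y₁ - greenSol ΦA P f (t - τ)‖ ≤ ρ → ‖y₂ - greenSol ΦA P f (t - τ)‖ ≤ ρ →
      ‖g t y₁ - g t y₂‖ ≤ L * ‖y₁ - y₂‖)
    (hLα : 4 * c * L < α) :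
    ∃! y : ℝ → (Fin p → V),
      AlmostAutomorphic y ∧
      (∀ t : ℝ, ‖y t - greenSol ΦA P f t‖ ≤ ρ) ∧
      (∀ (t : ℝ) (i : Fin p),
        HasDerivAt (fun t => y t i)
          ((∑ j : Fin p, A t i j • y t j) + f t i + g t (y (t - τ)) i) t) := by
  have D : Dich (fun t => matAct V p (A t)) (fun t => matAct V p (ΦA t))
      (fun t => matAct V p (ΦA t)⁻¹) (matAct V p P)
      (fun t s => matAct V p (GreenMat ΦA P t s)) c α := by
    refine ⟨(matAct V p).continuous.comp hAc, fun t => ?_, fun t => ?_, fun t => ?_, ?_,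
      fun t => ?_, fun t s => ?_, hc, hα, fun t s => (matAct_norm_le _).trans (hdich t s)⟩
    · rw [← matAct_mul]
      exact (matAct V p).hasFDerivAt.comp_hasDerivAt t (hΦA.1 t)
    · rw [← matAct_mul, Matrix.mul_nonsing_inv _ ((Matrix.isUnit_iff_isUnit_det _).1 (hΦA.2 t)),
        matAct_one]
    · rw [← matAct_mul, Matrix.nonsing_inv_mul _ ((Matrix.isUnit_iff_isUnit_det _).1 (hΦA.2 t)),
        matAct_one]
    · rw [← matAct_mul, hP]
    · rw [← matAct_mul, ← matAct_mul, hPcomm]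
    · simp only [GreenMat]
      split_ifs
      · rw [matAct_mul, matAct_mul]
      · rw [map_neg, matAct_mul, matAct_mul, map_sub, matAct_one]
  have key := D.main (AA_matAct hAc hAaa) τ ρ hρ f hfaa hfb g hgc hg0 hgaa L hL
    (greenSol ΦA P f) (fun t => rfl) hglip hLα
  have hiff : ∀ y : ℝ → (Fin p → V),
      (∀ t, HasDerivAt y (matAct V p (A t) (y t) + f t + g t (y (t - τ))) t) ↔
      (∀ (t : ℝ) (i : Fin p),
        HasDerivAt (fun t => y t i)
          ((∑ j : Fin p, A t i j • y t j) + f t i + g t (y (t - τ)) i) t) := by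
    intro y
    exact forall_congr' fun t => hasDerivAt_pi
  obtain ⟨y, ⟨h1, h2, h3⟩, hu⟩ := key
  exact ⟨y, ⟨h1, h2, (hiff y).1 h3⟩, fun z hz => hu z ⟨hz.1, hz.2.1, (hiff z).2 hz.2.2⟩⟩
end

section
/- Let δ, p : ℝ → ℝ be bounded, continuous and almost automorphic functions with δ(t) > 0 and p(t) > 0 for all t ∈ ℝ, and suppose δ is ergodic with mean M(δ) > 0. Let τ > 0. Then there exists γ₀ > 0, depending only on δ, p and τ, such that for every 0 < γ ≤ γ₀, the delayed Lasota–Wazewska equation y'(t) = −δ(t)·y(t) + p(t)·exp(−γ·y(t−τ)) has exactly one nonnegative bounded almost automorphic differentiable solution y : ℝ → ℝ. -/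
open MeasureTheory Filter Topology

/-- A bounded continuous function `f : ℝ → ℝ` is ergodic with mean `M` if
`(1/(2T)) ∫_{−T+ξ}^{T+ξ} f(s) ds → M` as `T → ∞`, uniformly with respect to `ξ ∈ ℝ`. -/
def ErgodicMeanR (f : ℝ → ℝ) (M : ℝ) : Prop :=
  ∀ ε > 0, ∃ T₁ > (0 : ℝ), ∀ T ≥ T₁, ∀ ξ : ℝ,
    |(2 * T)⁻¹ * (∫ s in (-T + ξ)..(T + ξ), f s) - M| < ε

namespace LW

structure Good (D P a c : ℝ) (δ p : ℝ → ℝ) : Prop where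
  md : Measurable δ
  mp : Measurable p
  bd : ∀ t, |δ t| ≤ D
  p0 : ∀ t, 0 ≤ p t
  pP : ∀ t, p t ≤ P
  lo : ∀ s t, s ≤ t → a * (t - s) - c ≤ ∫ v in s..t, δ v

noncomputable def A (γ τ : ℝ) (δ p y : ℝ → ℝ) (t : ℝ) : ℝ :=
  ∫ u in Set.Ioi (0:ℝ), Real.exp (-∫ v in (t-u)..t, δ v) * (p (t-u) * Real.exp (-γ * y (t-u-τ)))

noncomputable def It (γ τ : ℝ) (δ p : ℝ → ℝ) : ℕ → ℝ → ℝ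
  | 0 => fun _ => 0
  | k+1 => A γ τ δ p (It γ τ δ p k)

noncomputable def Y (γ τ : ℝ) (δ p : ℝ → ℝ) (t : ℝ) : ℝ :=
  limUnder atTop (fun k => It γ τ δ p k t)

variable {D P a c γ τ : ℝ} {δ p y z : ℝ → ℝ}

lemma Good.ii (h : Good D P a c δ p) (s t : ℝ) : IntervalIntegrable δ volume s t := by
  apply (intervalIntegrable_const (c := D)).mono_fun h.md.aestronglyMeasurable
  refine Eventually.of_forall fun x => ?_
  simp only [Real.norm_eq_abs]
  exact (h.bd x).trans (le_abs_self D)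

lemma Good.Pn (h : Good D P a c δ p) : 0 ≤ P := (h.p0 0).trans (h.pP 0)

lemma Good.shift (h : Good D P a c δ p) (r : ℝ) :
    Good D P a c (fun t => δ (t + r)) (fun t => p (t + r)) where
  md := h.md.comp (measurable_id.add_const r)
  mp := h.mp.comp (measurable_id.add_const r)
  bd t := h.bd _
  p0 t := h.p0 _
  pP t := h.pP _
  lo s t hst := by
    rw [intervalIntegral.integral_comp_add_right]
    have := h.lo (s + r) (t + r) (by linarith)
    linarith [this, show a * (t + r - (s + r)) - c = a * (t - s) - c by ring]

lemma int_tendsto {δn : ℕ → ℝ → ℝ} (hm : ∀ n, Measurable (δn n)) (hb : ∀ n t, |δn n t| ≤ D)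
    (hl : ∀ t, Tendsto (fun n => δn n t) atTop (𝓝 (δ t))) (s t : ℝ) :
    Tendsto (fun n => ∫ v in s..t, δn n v) atTop (𝓝 (∫ v in s..t, δ v)) := by
  apply intervalIntegral.tendsto_integral_filter_of_dominated_convergence (fun _ => D)
  · exact Eventually.of_forall fun n => (hm n).aestronglyMeasurable
  · exact Eventually.of_forall fun n => Eventually.of_forall fun x _ => hb n x
  · exact intervalIntegrable_const
  · exact Eventually.of_forall fun x _ => hl x

lemma Good.lim {δn pn : ℕ → ℝ → ℝ} (h : ∀ n, Good D P a c (δn n) (pn n))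
    (hl : ∀ t, Tendsto (fun n => δn n t) atTop (𝓝 (δ t)))
    (hp : ∀ t, Tendsto (fun n => pn n t) atTop (𝓝 (p t))) : Good D P a c δ p where
  md := measurable_of_tendsto_metrizable (fun n => (h n).md) (tendsto_pi_nhds.2 hl)
  mp := measurable_of_tendsto_metrizable (fun n => (h n).mp) (tendsto_pi_nhds.2 hp)
  bd t := le_of_tendsto (hl t).abs (Eventually.of_forall fun n => (h n).bd t)
  p0 t := ge_of_tendsto (hp t) (Eventually.of_forall fun n => (h n).p0 t)
  pP t := le_of_tendsto (hp t) (Eventually.of_forall fun n => (h n).pP t)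
  lo s t hst := ge_of_tendsto (int_tendsto (fun n => (h n).md) (fun n => (h n).bd) hl s t)
    (Eventually.of_forall fun n => (h n).lo s t hst)

lemma Good.expb (h : Good D P a c δ p) (t u : ℝ) (hu : 0 ≤ u) :
    Real.exp (-∫ v in (t-u)..t, δ v) ≤ Real.exp c * Real.exp (-a * u) := by
  rw [← Real.exp_add]
  apply Real.exp_le_exp.2
  have := h.lo (t - u) t (by linarith)
  have e : a * (t - (t - u)) = a * u := by ring
  linarith

lemma exp_le_one (hγ : 0 ≤ γ) {x : ℝ} (hx : 0 ≤ x) : Real.exp (-γ * x) ≤ 1 := by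
  apply Real.exp_le_one_iff.2
  nlinarith [mul_nonneg hγ hx]

lemma Good.integrand_bd (h : Good D P a c δ p) (hγ : 0 ≤ γ) (hy : ∀ t, 0 ≤ y t)
    (t u : ℝ) (hu : 0 ≤ u) :
    ‖Real.exp (-∫ v in (t-u)..t, δ v) * (p (t-u) * Real.exp (-γ * y (t-u-τ)))‖ ≤
      Real.exp c * P * Real.exp (-a * u) := by
  have h1 := h.expb t u hu
  have h2 := exp_le_one hγ (hy (t-u-τ))
  have h3 := h.p0 (t-u)
  have h4 : p (t-u) * Real.exp (-γ * y (t-u-τ)) ≤ P * 1 :=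
    mul_le_mul (h.pP _) h2 (Real.exp_pos _).le h.Pn
  rw [Real.norm_of_nonneg (by positivity)]
  calc _ ≤ (Real.exp c * Real.exp (-a * u)) * (P * 1) := mul_le_mul h1 h4 (by positivity) (by positivity)
    _ = _ := by ring

lemma Good.prim_cont (h : Good D P a c δ p) : Continuous fun t => ∫ v in (0:ℝ)..t, δ v :=
  intervalIntegral.continuous_primitive (fun s t => h.ii s t) 0

lemma Good.prim_sub (h : Good D P a c δ p) (s t : ℝ) :
    ∫ v in s..t, δ v = (∫ v in (0:ℝ)..t, δ v) - ∫ v in (0:ℝ)..s, δ v :=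
  (intervalIntegral.integral_interval_sub_left (h.ii _ _) (h.ii _ _)).symm

lemma Good.jm (h : Good D P a c δ p) (hy : Measurable y) :
    Measurable fun q : ℝ × ℝ => Real.exp (-∫ v in (q.1-q.2)..q.1, δ v) *
      (p (q.1-q.2) * Real.exp (-γ * y (q.1-q.2-τ))) := by
  have e : (fun q : ℝ × ℝ => ∫ v in (q.1-q.2)..q.1, δ v) =
      fun q : ℝ × ℝ => (∫ v in (0:ℝ)..q.1, δ v) - ∫ v in (0:ℝ)..(q.1-q.2), δ v := by
    funext q; exact h.prim_sub _ _
  have hm : Measurable (fun q : ℝ × ℝ => ∫ v in (q.1-q.2)..q.1, δ v) := by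
    rw [e]
    have := h.prim_cont
    exact (this.measurable.comp measurable_fst).sub
      (this.measurable.comp (measurable_fst.sub measurable_snd))
  have hs : Measurable (fun q : ℝ × ℝ => q.1 - q.2) := measurable_fst.sub measurable_snd
  exact hm.neg.exp.mul ((h.mp.comp hs).mul
    (((hy.comp (hs.sub_const τ)).const_mul (-γ)).exp))

lemma Good.um (h : Good D P a c δ p) (hy : Measurable y) (t : ℝ) :
    Measurable fun u : ℝ => Real.exp (-∫ v in (t-u)..t, δ v) *
      (p (t-u) * Real.exp (-γ * y (t-u-τ))) :=
  (h.jm hy).comp (measurable_const.prodMk measurable_id)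

lemma Good.A_meas (h : Good D P a c δ p) (hy : Measurable y) : Measurable (A γ τ δ p y) := by
  have := (h.jm (γ := γ) (τ := τ) hy).stronglyMeasurable
  exact (this.integral_prod_right (ν := volume.restrict (Set.Ioi (0:ℝ)))).measurable

lemma expint (ha : 0 < a) : IntegrableOn (fun u => Real.exp (-a * u)) (Set.Ioi 0) volume :=
  exp_neg_integrableOn_Ioi 0 ha

lemma expval (ha : 0 < a) : ∫ u in Set.Ioi (0:ℝ), Real.exp (-a * u) = 1 / a := by
  rw [integral_exp_mul_Ioi (by linarith)]
  simp [neg_div_neg_eq]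

lemma Good.uint (h : Good D P a c δ p) (ha : 0 < a) (hγ : 0 ≤ γ) (hy : ∀ t, 0 ≤ y t)
    (hm : Measurable y) (t : ℝ) :
    IntegrableOn (fun u : ℝ => Real.exp (-∫ v in (t-u)..t, δ v) *
      (p (t-u) * Real.exp (-γ * y (t-u-τ)))) (Set.Ioi 0) volume := by
  apply Integrable.mono' ((expint ha).const_mul (Real.exp c * P)) (h.um hm t).aestronglyMeasurable
  refine (ae_restrict_iff' measurableSet_Ioi).2 (Eventually.of_forall fun u hu => ?_)
  exact h.integrand_bd hγ hy t u (le_of_lt hu)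

lemma Good.A_nonneg (h : Good D P a c δ p) (t : ℝ) : 0 ≤ A γ τ δ p y t :=
  integral_nonneg fun u => mul_nonneg (Real.exp_pos _).le
    (mul_nonneg (h.p0 _) (Real.exp_pos _).le)

lemma Good.A_le (h : Good D P a c δ p) (ha : 0 < a) (hγ : 0 ≤ γ) (hy : ∀ t, 0 ≤ y t)
    (t : ℝ) : A γ τ δ p y t ≤ Real.exp c * P * (1 / a) := by
  rw [← expval ha, ← integral_const_mul]
  refine (le_abs_self _).trans ?_
  rw [← Real.norm_eq_abs]
  unfold A
  apply norm_integral_le_of_norm_le ((expint ha).const_mul (Real.exp c * P))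
  refine (ae_restrict_iff' measurableSet_Ioi).2 (Eventually.of_forall fun u hu => ?_)
  exact h.integrand_bd hγ hy t u (le_of_lt hu)

lemma exp_lip (hγ : 0 ≤ γ) {x w : ℝ} (hx : 0 ≤ x) (hw : 0 ≤ w) :
    |Real.exp (-γ * x) - Real.exp (-γ * w)| ≤ γ * |x - w| := by
  wlog hxw : x ≤ w generalizing x w
  · rw [abs_sub_comm, abs_sub_comm x]; exact this hw hx (le_of_not_ge hxw)
  have h1 : Real.exp (-γ * w) ≤ Real.exp (-γ * x) := Real.exp_le_exp.2 (by nlinarith)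
  rw [abs_of_nonneg (by linarith), abs_of_nonpos (by linarith)]
  have e : Real.exp (-γ * w) = Real.exp (-γ * x) * Real.exp (-γ * (w - x)) := by
    rw [← Real.exp_add]; ring_nf
  have h2 := Real.add_one_le_exp (-γ * (w - x))
  have h3 := exp_le_one hγ hx
  have h4 := exp_le_one hγ (x := w - x) (by linarith)
  have h5 := Real.exp_pos (-γ * x)
  rw [e]
  nlinarith

lemma Good.contr (h : Good D P a c δ p) (ha : 0 < a) (hγ : 0 ≤ γ)
    (hq : Real.exp c * P * γ * (1 / a) ≤ 1 / 2)
    (hy : ∀ t, 0 ≤ y t) (hym : Measurable y) (hz : ∀ t, 0 ≤ z t) (hzm : Measurable z)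
    {B : ℝ} (hB : ∀ t, |y t - z t| ≤ B) (t : ℝ) :
    |A γ τ δ p y t - A γ τ δ p z t| ≤ B / 2 := by
  have hB0 : 0 ≤ B := (abs_nonneg _).trans (hB 0)
  unfold A
  rw [← integral_sub (h.uint ha hγ hy hym t) (h.uint ha hγ hz hzm t)]
  have : |∫ u in Set.Ioi (0:ℝ), (Real.exp (-∫ v in (t-u)..t, δ v) * (p (t-u) * Real.exp (-γ * y (t-u-τ)))
     - Real.exp (-∫ v in (t-u)..t, δ v) * (p (t-u) * Real.exp (-γ * z (t-u-τ))))|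
     ≤ ∫ u in Set.Ioi (0:ℝ), (Real.exp c * P * γ * B) * Real.exp (-a * u) := by
    rw [← Real.norm_eq_abs]
    apply norm_integral_le_of_norm_le ((expint ha).const_mul _)
    refine (ae_restrict_iff' measurableSet_Ioi).2 (Eventually.of_forall fun u hu => ?_)
    rw [← mul_sub, ← mul_sub, Real.norm_eq_abs, abs_mul, abs_mul, abs_of_pos (Real.exp_pos _),
      abs_of_nonneg (h.p0 _)]
    have h1 := h.expb t u (le_of_lt hu)
    have h2 := exp_lip hγ (hy (t-u-τ)) (hz (t-u-τ))
    have h3 : γ * |y (t-u-τ) - z (t-u-τ)| ≤ γ * B := mul_le_mul_of_nonneg_left (hB _) hγ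
    have h4 := mul_le_mul (h.pP (t-u)) (h2.trans h3) (abs_nonneg _) h.Pn
    calc _ ≤ (Real.exp c * Real.exp (-a * u)) * (P * (γ * B)) :=
          mul_le_mul h1 h4 (mul_nonneg (h.p0 _) (abs_nonneg _)) (by positivity)
      _ = _ := by ring
  refine this.trans ?_
  rw [integral_const_mul, expval ha]
  nlinarith

lemma A_tendsto {δn pn yn : ℕ → ℝ → ℝ} (ha : 0 < a) (hγ : 0 ≤ γ)
    (h : ∀ n, Good D P a c (δn n) (pn n))
    (hl : ∀ t, Tendsto (fun n => δn n t) atTop (𝓝 (δ t)))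
    (hp : ∀ t, Tendsto (fun n => pn n t) atTop (𝓝 (p t)))
    (hy0 : ∀ n t, 0 ≤ yn n t) (hym : ∀ n, Measurable (yn n))
    (hy : ∀ t, Tendsto (fun n => yn n t) atTop (𝓝 (y t))) (t : ℝ) :
    Tendsto (fun n => A γ τ (δn n) (pn n) (yn n) t) atTop (𝓝 (A γ τ δ p y t)) := by
  unfold A
  apply tendsto_integral_of_dominated_convergence (fun u => Real.exp c * P * Real.exp (-a * u))
  · exact fun n => ((h n).um (hym n) t).aestronglyMeasurable
  · exact (expint ha).const_mul _
  · intro n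
    refine (ae_restrict_iff' measurableSet_Ioi).2 (Eventually.of_forall fun u hu => ?_)
    exact (h n).integrand_bd hγ (hy0 n) t u (le_of_lt hu)
  · refine Eventually.of_forall fun u => ?_
    have h1 := int_tendsto (fun n => (h n).md) (fun n => (h n).bd) hl (t-u) t
    exact ((Real.continuous_exp.tendsto _).comp h1.neg).mul ((hp _).mul
      ((Real.continuous_exp.tendsto _).comp ((hy _).const_mul _)))

lemma Good.It_nonneg (h : Good D P a c δ p) (k : ℕ) (t : ℝ) : 0 ≤ It γ τ δ p k t := by
  cases k with
  | zero => exact le_rfl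
  | succ k => exact h.A_nonneg t

lemma Good.It_meas (h : Good D P a c δ p) (k : ℕ) : Measurable (It γ τ δ p k) := by
  induction k with
  | zero => exact measurable_const
  | succ k ih => exact h.A_meas ih

lemma It_tendsto {δn pn : ℕ → ℝ → ℝ} (ha : 0 < a) (hγ : 0 ≤ γ)
    (h : ∀ n, Good D P a c (δn n) (pn n))
    (hl : ∀ t, Tendsto (fun n => δn n t) atTop (𝓝 (δ t)))
    (hp : ∀ t, Tendsto (fun n => pn n t) atTop (𝓝 (p t))) (k : ℕ) (t : ℝ) :
    Tendsto (fun n => It γ τ (δn n) (pn n) k t) atTop (𝓝 (It γ τ δ p k t)) := by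
  induction k generalizing t with
  | zero => exact tendsto_const_nhds
  | succ k ih =>
    exact A_tendsto ha hγ h hl hp (fun n t => (h n).It_nonneg k t) (fun n => (h n).It_meas k) ih t

lemma A_shift (r t : ℝ) :
    A γ τ (fun t => δ (t + r)) (fun t => p (t + r)) (fun t => y (t + r)) t = A γ τ δ p y (t + r) := by
  unfold A
  congr 1
  funext u
  beta_reduce
  rw [intervalIntegral.integral_comp_add_right]
  rw [show t - u + r = t + r - u by ring, show t - u - τ + r = t + r - u - τ by ring]

lemma It_shift (r : ℝ) (k : ℕ) :
    It γ τ (fun t => δ (t + r)) (fun t => p (t + r)) k = fun t => It γ τ δ p k (t + r) := by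
  induction k with
  | zero => rfl
  | succ k ih => funext t; simp only [It]; rw [ih]; exact A_shift r t

lemma Y_shift (r t : ℝ) :
    Y γ τ (fun t => δ (t + r)) (fun t => p (t + r)) t = Y γ τ δ p (t + r) := by
  unfold Y; simp only [It_shift]

lemma Good.It_step (h : Good D P a c δ p) (ha : 0 < a) (hγ : 0 ≤ γ)
    (hq : Real.exp c * P * γ * (1 / a) ≤ 1 / 2) (k : ℕ) (t : ℝ) :
    |It γ τ δ p k t - It γ τ δ p (k+1) t| ≤ (2 * (Real.exp c * P * (1 / a))) / 2 / 2 ^ k := by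
  induction k generalizing t with
  | zero =>
    have h1 := h.A_le (τ := τ) (y := fun _ => 0) ha hγ (fun _ => le_rfl) t
    have h2 := h.A_nonneg (γ := γ) (τ := τ) (y := fun _ => 0) t
    simp only [It, zero_sub, abs_neg, pow_zero]
    rw [abs_of_nonneg h2]; linarith
  | succ k ih =>
    have := h.contr (τ := τ) ha hγ hq (h.It_nonneg k) (h.It_meas k) (h.It_nonneg (k+1))
      (h.It_meas (k+1)) ih t
    refine this.trans (le_of_eq ?_)
    rw [pow_succ]; field_simp

lemma Good.Y_lim (h : Good D P a c δ p) (ha : 0 < a) (hγ : 0 ≤ γ)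
    (hq : Real.exp c * P * γ * (1 / a) ≤ 1 / 2) (t : ℝ) :
    Tendsto (fun k => It γ τ δ p k t) atTop (𝓝 (Y γ τ δ p t)) :=
  (cauchySeq_of_le_geometric_two (C := 2 * (Real.exp c * P * (1 / a)))
    (fun k => h.It_step ha hγ hq k t)).tendsto_limUnder

lemma Good.Y_dist (h : Good D P a c δ p) (ha : 0 < a) (hγ : 0 ≤ γ)
    (hq : Real.exp c * P * γ * (1 / a) ≤ 1 / 2) (k : ℕ) (t : ℝ) :
    |It γ τ δ p k t - Y γ τ δ p t| ≤ (2 * (Real.exp c * P * (1 / a))) / 2 ^ k :=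
  dist_le_of_le_geometric_two_of_tendsto 
    (fun k => h.It_step ha hγ hq k t) (h.Y_lim ha hγ hq t) k

lemma geo (B : ℝ) : Tendsto (fun k : ℕ => B / 2 ^ k) atTop (𝓝 0) := by
  have := (tendsto_pow_atTop_nhds_zero_of_lt_one (r := (1/2:ℝ)) (by norm_num)
    (by norm_num)).const_mul B
  simpa [div_eq_mul_inv] using this

lemma Y_tendsto {δn pn : ℕ → ℝ → ℝ} (ha : 0 < a) (hγ : 0 ≤ γ)
    (hq : Real.exp c * P * γ * (1 / a) ≤ 1 / 2)
    (h : ∀ n, Good D P a c (δn n) (pn n))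
    (hl : ∀ t, Tendsto (fun n => δn n t) atTop (𝓝 (δ t)))
    (hp : ∀ t, Tendsto (fun n => pn n t) atTop (𝓝 (p t))) (t : ℝ) :
    Tendsto (fun n => Y γ τ (δn n) (pn n) t) atTop (𝓝 (Y γ τ δ p t)) := by
  have hg := Good.lim h hl hp
  rw [Metric.tendsto_atTop]
  intro ε hε
  obtain ⟨k, hk⟩ := ((geo (2 * (Real.exp c * P * (1 / a)))).eventually
    (gt_mem_nhds (show 0 < ε / 3 by linarith))).exists
  obtain ⟨N, hN⟩ := Metric.tendsto_atTop.1 (It_tendsto (τ := τ) ha hγ h hl hp k t) (ε/3) (by linarith)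
  refine ⟨N, fun n hn => ?_⟩
  have h1 := (h n).Y_dist (τ := τ) ha hγ hq k t
  have h2 := hg.Y_dist (τ := τ) ha hγ hq k t
  have h3 := hN n hn
  rw [Real.dist_eq, abs_lt] at *
  rw [abs_le] at h1 h2
  constructor <;> linarith [h1.1, h1.2, h2.1, h2.2, h3.1, h3.2]

lemma Good.Y_nonneg (h : Good D P a c δ p) (ha : 0 < a) (hγ : 0 ≤ γ)
    (hq : Real.exp c * P * γ * (1 / a) ≤ 1 / 2) (t : ℝ) : 0 ≤ Y γ τ δ p t :=
  ge_of_tendsto (h.Y_lim ha hγ hq t) (Eventually.of_forall fun k => h.It_nonneg k t)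

lemma Good.Y_meas (h : Good D P a c δ p) (ha : 0 < a) (hγ : 0 ≤ γ)
    (hq : Real.exp c * P * γ * (1 / a) ≤ 1 / 2) : Measurable (Y γ τ δ p) :=
  measurable_of_tendsto_metrizable (fun k => h.It_meas k)
    (tendsto_pi_nhds.2 (h.Y_lim ha hγ hq))

lemma Good.Y_fix (h : Good D P a c δ p) (ha : 0 < a) (hγ : 0 ≤ γ)
    (hq : Real.exp c * P * γ * (1 / a) ≤ 1 / 2) (t : ℝ) :
    Y γ τ δ p t = A γ τ δ p (Y γ τ δ p) t := by
  have h1 : Tendsto (fun k => It γ τ δ p (k+1) t) atTop (𝓝 (Y γ τ δ p t)) :=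
    (h.Y_lim ha hγ hq t).comp (tendsto_add_atTop_nat 1)
  refine tendsto_nhds_unique h1 ?_
  exact A_tendsto ha hγ (fun _ => h) (fun _ => tendsto_const_nhds) (fun _ => tendsto_const_nhds)
    (fun k => h.It_nonneg k) (fun k => h.It_meas k) (h.Y_lim ha hγ hq) t

lemma Good.fix_unique (h : Good D P a c δ p) (ha : 0 < a) (hγ : 0 ≤ γ)
    (hq : Real.exp c * P * γ * (1 / a) ≤ 1 / 2)
    (hy : ∀ t, 0 ≤ y t) (hym : Measurable y) (hz : ∀ t, 0 ≤ z t) (hzm : Measurable z)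
    (fy : ∀ t, y t = A γ τ δ p y t) (fz : ∀ t, z t = A γ τ δ p z t) : y = z := by
  have key : ∀ k : ℕ, ∀ t, |y t - z t| ≤ (Real.exp c * P * (1 / a)) / 2 ^ k := by
    intro k
    induction k with
    | zero =>
      intro t
      have h1 := h.A_le (τ := τ) ha hγ hy t
      have h2 := h.A_le (τ := τ) ha hγ hz t
      rw [← fy] at h1
      rw [← fz] at h2
      rw [pow_zero, div_one, abs_le]
      constructor <;> linarith [hy t, hz t]
    | succ k ih =>
      intro t
      rw [fy, fz]
      refine (h.contr ha hγ hq hy hym hz hzm ih t).trans (le_of_eq ?_)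
      rw [pow_succ]; field_simp
  funext t
  have := ge_of_tendsto (geo _) (Eventually.of_forall fun k => key k t)
  exact sub_eq_zero.1 (abs_eq_zero.1 (le_antisymm this (abs_nonneg _)))

/-- the weighted forcing term -/
noncomputable def g (γ τ : ℝ) (δ p y : ℝ → ℝ) (s : ℝ) : ℝ :=
  Real.exp (∫ v in (0:ℝ)..s, δ v) * (p s * Real.exp (-γ * y (s-τ)))

lemma Good.A_pt (h : Good D P a c δ p) (t u : ℝ) :
    Real.exp (-∫ v in (t-u)..t, δ v) * (p (t-u) * Real.exp (-γ * y (t-u-τ))) =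
    Real.exp (-∫ v in (0:ℝ)..t, δ v) * g γ τ δ p y (t-u) := by
  unfold g
  rw [h.prim_sub]
  have e : ∀ x w q : ℝ, Real.exp (-(x - w)) * q = Real.exp (-x) * (Real.exp w * q) := by
    intro x w q
    rw [← mul_assoc, ← Real.exp_add]; ring_nf
  exact e _ _ _

lemma Good.g_int (h : Good D P a c δ p) (ha : 0 < a) (hγ : 0 ≤ γ) (hy : ∀ t, 0 ≤ y t)
    (hm : Measurable y) (t : ℝ) : IntegrableOn (g γ τ δ p y) (Set.Iic t) := by
  have h1 := h.uint (τ := τ) ha hγ hy hm t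
  simp only [h.A_pt] at h1
  have h2 : IntegrableOn (fun u => g γ τ δ p y (t-u)) (Set.Ioi 0) := by
    have := h1.const_mul (Real.exp (∫ v in (0:ℝ)..t, δ v))
    simp only [← mul_assoc, ← Real.exp_add, add_neg_cancel, Real.exp_zero, one_mul] at this
    exact this
  rw [integrableOn_Iic_iff_integrableOn_Iio]
  have e : Set.Ioi (0:ℝ) = (fun u => t - u) ⁻¹' Set.Iio t := by ext x; simp
  rw [e] at h2
  exact ((Measure.measurePreserving_sub_left volume t).integrableOn_comp_preimage
    (MeasurableEquiv.subLeft t).measurableEmbedding).1 h2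

lemma Good.A_eq (h : Good D P a c δ p) (t : ℝ) :
    A γ τ δ p y t = Real.exp (-∫ v in (0:ℝ)..t, δ v) * ∫ s in Set.Iic t, g γ τ δ p y s := by
  unfold A
  simp only [h.A_pt]
  rw [integral_const_mul, integral_Iic_eq_integral_Iio]
  congr 1
  have e : Set.Ioi (0:ℝ) = (fun u => t - u) ⁻¹' Set.Iio t := by ext x; simp
  rw [e]
  exact (Measure.measurePreserving_sub_left volume t).setIntegral_preimage_emb
    (MeasurableEquiv.subLeft t).measurableEmbedding _ _

lemma Good.A_eq' (h : Good D P a c δ p) (ha : 0 < a) (hγ : 0 ≤ γ) (hy : ∀ t, 0 ≤ y t)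
    (hm : Measurable y) (t : ℝ) :
    A γ τ δ p y t = Real.exp (-∫ v in (0:ℝ)..t, δ v) *
      ((∫ s in Set.Iic 0, g γ τ δ p y s) + ∫ s in (0:ℝ)..t, g γ τ δ p y s) := by
  rw [h.A_eq, ← intervalIntegral.integral_Iic_sub_Iic (h.g_int ha hγ hy hm 0) (h.g_int ha hγ hy hm t)]
  ring

lemma Good.A_cont (h : Good D P a c δ p) (ha : 0 < a) (hγ : 0 ≤ γ) (hy : ∀ t, 0 ≤ y t)
    (hm : Measurable y) : Continuous (A γ τ δ p y) := by
  rw [funext (h.A_eq' ha hγ hy hm)]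
  have h1 := h.prim_cont
  have h2 : Continuous fun t => ∫ s in (0:ℝ)..t, g γ τ δ p y s := by
    refine intervalIntegral.continuous_primitive (fun s t => ?_) 0
    rw [intervalIntegrable_iff]
    exact (h.g_int ha hγ hy hm (max s t)).mono_set (fun x hx => hx.2)
  fun_prop

lemma Good.A_deriv (h : Good D P a c δ p) (ha : 0 < a) (hγ : 0 ≤ γ) (hy : ∀ t, 0 ≤ y t)
    (hc : Continuous y) (hδ : Continuous δ) (hp : Continuous p) (t : ℝ) :
    HasDerivAt (A γ τ δ p y) (-δ t * A γ τ δ p y t + p t * Real.exp (-γ * y (t - τ))) t := by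
  have hgc : Continuous (g γ τ δ p y) := by
    have h1 := h.prim_cont
    unfold g; fun_prop
  have d1 : HasDerivAt (fun t => ∫ v in (0:ℝ)..t, δ v) (δ t) t :=
    intervalIntegral.integral_hasDerivAt_right (h.ii _ _)
      hδ.aestronglyMeasurable.stronglyMeasurableAtFilter hδ.continuousAt
  have d2 : HasDerivAt (fun t => ∫ v in (0:ℝ)..t, g γ τ δ p y v) (g γ τ δ p y t) t :=
    intervalIntegral.integral_hasDerivAt_right (hgc.intervalIntegrable _ _)
      hgc.aestronglyMeasurable.stronglyMeasurableAtFilter hgc.continuousAt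
  have d3 := d1.neg.exp.mul (d2.const_add (∫ s in Set.Iic 0, g γ τ δ p y s))
  have e := funext (h.A_eq' (τ := τ) ha hγ hy hc.measurable)
  rw [e]
  refine d3.congr_deriv ?_
  simp only [Pi.neg_apply]
  have e2 : Real.exp (-∫ v in (0:ℝ)..t, δ v) * g γ τ δ p y t = p t * Real.exp (-γ * y (t - τ)) := by
    unfold g
    rw [← mul_assoc, ← Real.exp_add, neg_add_cancel, Real.exp_zero, one_mul]
  rw [e2]; ring

lemma Good.fix_of_sol (h : Good D P a c δ p) (ha : 0 < a) (hγ : 0 ≤ γ) (hy : ∀ t, 0 ≤ y t)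
    (hc : Continuous y) (hδ : Continuous δ) {C : ℝ} (hC : ∀ t, |y t| ≤ C)
    (hd : ∀ t, HasDerivAt y (-δ t * y t + p t * Real.exp (-γ * y (t - τ))) t) (t : ℝ) :
    y t = A γ τ δ p y t := by
  have d1 : ∀ t, HasDerivAt (fun t => ∫ v in (0:ℝ)..t, δ v) (δ t) t := fun t =>
    intervalIntegral.integral_hasDerivAt_right (h.ii _ _)
      hδ.aestronglyMeasurable.stronglyMeasurableAtFilter hδ.continuousAt
  have d2 : ∀ t, HasDerivAt (fun t => Real.exp (∫ v in (0:ℝ)..t, δ v) * y t) (g γ τ δ p y t) t := by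
    intro t
    refine ((d1 t).exp.mul (hd t)).congr_deriv ?_
    unfold g; ring
  have lim : Tendsto (fun t => Real.exp (∫ v in (0:ℝ)..t, δ v) * y t) atBot (𝓝 0) := by
    have hb : Tendsto (fun t : ℝ => Real.exp (a * t + c) * C) atBot (𝓝 0) := by
      have : Tendsto (fun t : ℝ => a * t + c) atBot atBot :=
        tendsto_atBot_add_const_right _ _ (tendsto_id.const_mul_atBot ha)
      simpa using (Real.tendsto_exp_atBot.comp this).mul_const C
    refine tendsto_of_tendsto_of_tendsto_of_le_of_le' tendsto_const_nhds hb
      (Eventually.of_forall fun s => mul_nonneg (Real.exp_pos _).le (hy s)) ?_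
    filter_upwards [eventually_le_atBot 0] with s hs
    refine mul_le_mul (Real.exp_le_exp.2 ?_) ((le_abs_self _).trans (hC s)) (hy s) (Real.exp_pos _).le
    have := h.lo s 0 hs
    rw [intervalIntegral.integral_symm]
    linarith [show a * (0 - s) = - (a * s) by ring]
  have := integral_Iic_of_hasDerivAt_of_tendsto' (fun x _ => d2 x)
    (h.g_int (τ := τ) ha hγ hy hc.measurable t) lim
  rw [h.A_eq, this, sub_zero, ← mul_assoc, ← Real.exp_add, neg_add_cancel, Real.exp_zero, one_mul]

lemma Good.Y_cont (h : Good D P a c δ p) (ha : 0 < a) (hγ : 0 ≤ γ)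
    (hq : Real.exp c * P * γ * (1 / a) ≤ 1 / 2) : Continuous (Y γ τ δ p) := by
  rw [funext (h.Y_fix ha hγ hq)]
  exact h.A_cont ha hγ (h.Y_nonneg ha hγ hq) (h.Y_meas ha hγ hq)

lemma Good.Y_aa (h : Good D P a c δ p) (ha : 0 < a) (hγ : 0 ≤ γ)
    (hq : Real.exp c * P * γ * (1 / a) ≤ 1 / 2)
    (hδ : AlmostAutomorphic δ) (hp : AlmostAutomorphic p) : AlmostAutomorphic (Y γ τ δ p) := by
  refine ⟨h.Y_cont ha hγ hq, fun σ => ?_⟩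
  obtain ⟨k, hk, δt, hδ1, hδ2⟩ := hδ.2 σ
  obtain ⟨l, hl, pt, hp1, hp2⟩ := hp.2 (σ ∘ k)
  have hδ1' : ∀ t, Tendsto (fun n => δ (t + σ (k (l n)))) atTop (𝓝 (δt t)) :=
    fun t => (hδ1 t).comp hl.tendsto_atTop
  have hδ2' : ∀ t, Tendsto (fun n => δt (t + -σ (k (l n)))) atTop (𝓝 (δ t)) :=
    fun t => (hδ2 t).comp hl.tendsto_atTop
  have hg := Good.lim (fun n => h.shift (σ (k (l n)))) hδ1' hp1
  refine ⟨k ∘ l, hk.comp hl, Y γ τ δt pt, fun t => ?_, fun t => ?_⟩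
  · have := Y_tendsto (τ := τ) ha hγ hq (fun n => h.shift (σ (k (l n)))) hδ1' hp1 t
    simp only [Y_shift] at this
    exact this
  · have := Y_tendsto (τ := τ) ha hγ hq (fun n => hg.shift (-σ (k (l n)))) hδ2' hp2 t
    simp only [Y_shift] at this
    exact this

lemma exists_good (hδc : Continuous δ) (hδb : ∃ C, ∀ t, |δ t| ≤ C)
    (hpc : Continuous p) (hpb : ∃ C, ∀ t, |p t| ≤ C)
    (hδpos : ∀ t : ℝ, 0 < δ t) (hppos : ∀ t : ℝ, 0 < p t)
    {M : ℝ} (hM : ErgodicMeanR δ M) (hMpos : 0 < M) :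
    ∃ D P a c, 0 < a ∧ Good D P a c δ p := by
  obtain ⟨D, hD⟩ := hδb
  obtain ⟨P, hP⟩ := hpb
  obtain ⟨T, hT, hm⟩ := hM (M/2) (by linarith)
  refine ⟨D, P, M/2, M*T, by linarith, hδc.measurable, hpc.measurable, hD,
    fun t => (hppos t).le, fun t => (le_abs_self _).trans (hP t), fun s t hst => ?_⟩
  rcases le_total (2*T) (t-s) with h | h
  · have := (abs_lt.1 (hm ((t-s)/2) (by linarith) ((t+s)/2))).1
    rw [show -((t-s)/2) + (t+s)/2 = s by ring, show (t-s)/2 + (t+s)/2 = t by ring,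
      show 2 * ((t-s)/2) = t - s by ring] at this
    have hpos : 0 < t - s := by linarith
    have h2 : M/2 ≤ (t-s)⁻¹ * ∫ v in s..t, δ v := by linarith
    rw [inv_mul_eq_div, le_div_iff₀ hpos] at h2
    nlinarith [mul_pos hMpos hT]
  · have : 0 ≤ ∫ v in s..t, δ v :=
      intervalIntegral.integral_nonneg hst (fun u _ => (hδpos u).le)
    nlinarith

end LW

theorem delayed_lasota_wazewska_unique_almost_automorphic_solution
    (δ p : ℝ → ℝ)
    (hδc : Continuous δ) (hδb : ∃ C, ∀ t, |δ t| ≤ C) (hδaa : AlmostAutomorphic δ)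
    (hpc : Continuous p) (hpb : ∃ C, ∀ t, |p t| ≤ C) (hpaa : AlmostAutomorphic p)
    (hδpos : ∀ t : ℝ, 0 < δ t) (hppos : ∀ t : ℝ, 0 < p t)
    (M : ℝ) (hM : ErgodicMeanR δ M) (hMpos : 0 < M)
    (τ : ℝ) (hτ : 0 < τ) :
    ∃ γ₀ > (0 : ℝ), ∀ γ : ℝ, 0 < γ → γ ≤ γ₀ →
      ∃! y : ℝ → ℝ,
        AlmostAutomorphic y ∧
        (∀ t : ℝ, 0 ≤ y t) ∧
        (∃ C, ∀ t : ℝ, |y t| ≤ C) ∧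
        (∀ t : ℝ, HasDerivAt y (-δ t * y t + p t * Real.exp (-γ * y (t - τ))) t) := by
  obtain ⟨D, P, a, c, ha, h⟩ := LW.exists_good hδc hδb hpc hpb hδpos hppos hM hMpos
  have hP : 0 < P := (hppos 0).trans_le (h.pP 0)
  refine ⟨a / (2 * (Real.exp c * P)), by positivity, fun γ hγ hγ0 => ?_⟩
  have hq : Real.exp c * P * γ * (1 / a) ≤ 1 / 2 := by
    have hE : 0 < Real.exp c * P := by positivity
    rw [le_div_iff₀ (by positivity)] at hγ0
    rw [mul_one_div, div_le_iff₀ ha]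
    linarith
  have hYf := h.Y_fix (τ := τ) ha hγ.le hq
  have hYn := h.Y_nonneg (τ := τ) ha hγ.le hq
  refine ⟨LW.Y γ τ δ p, ⟨h.Y_aa ha hγ.le hq hδaa hpaa, hYn,
    ⟨Real.exp c * P * (1 / a), fun t => ?_⟩, fun t => ?_⟩, ?_⟩
  · rw [abs_of_nonneg (hYn t), hYf]
    exact h.A_le ha hγ.le hYn t
  · have := h.A_deriv (τ := τ) ha hγ.le hYn (h.Y_cont ha hγ.le hq) hδc hpc t
    rwa [← funext hYf] at this
  · rintro y ⟨hy1, hy2, ⟨C, hC⟩, hy4⟩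
    exact h.fix_unique ha hγ.le hq hy2 hy1.1.measurable hYn (h.Y_meas ha hγ.le hq)
      (h.fix_of_sol ha hγ.le hy2 hy1.1 hδc hC hy4) hYf
end
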